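/- Suppose Σ_{n=1}^N q_n(m) ≤ R ln V_N for some integer 2 ≤ m ≤ 2K and a constant R. Fix ε̄ > 0, let 𝓑 = 𝓑_N = {1 ≤ n ≤ N : q_n(m) ≥ ε̄} (so that N₀ := |𝓑| ≤ R ln V_N / ε̄), and let 𝓔 be the σ-algebra generated by {X_n : n ∈ 𝓑}. Then there is a constant C' > 0, independent of N, such that almost surely: | E(S_N | 𝓔) − E(S_N) | ≤ C' N₀ ≤ C' R ln V_N / ε̄, and | Var(S_N | 𝓔) − V_N | ≤ C' ln² V_N. -/

import Mathlib

open MeasureTheory ProbabilityTheory Filter Finset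
open scoped ENNReal Topology

noncomputable section

namespace EdgeworthMC

variable {Ω E : Type*} [MeasurableSpace Ω] [MeasurableSpace E]

/-- The standard Gaussian density `𝔤(u) = (2π)^{-1/2} e^{-u²/2}`. -/
def gaussDensity (u : ℝ) : ℝ := (Real.sqrt (2 * Real.pi))⁻¹ * Real.exp (-u ^ 2 / 2)

/-- `UEChain μ X κ C` : the process `X` is a Markov chain (with respect to the probability
measure `μ`) with transition kernels `κ n` from the state at time `n` to the state at time
`n+1`, and the chain is uniformly elliptic with ellipticity constant `C`:
`C⁻¹ ℙ(X_{n+1} ∈ A) ≤ ℙ(X_{n+1} ∈ A | X_n = x) ≤ C ℙ(X_{n+1} ∈ A)` for a.e. `x`. -/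
def UEChain (μ : Measure Ω) (X : ℕ → Ω → E) (κ : ℕ → Kernel E E) (C : ℝ) : Prop :=
  IsProbabilityMeasure μ ∧
  (∀ n, Measurable (X n)) ∧
  (∀ n, IsMarkovKernel (κ n)) ∧
  (∀ n (A : Set E), MeasurableSet A →
      (μ[fun ω => A.indicator (fun _ => (1 : ℝ)) (X (n + 1) ω) |
          ⨆ i : Fin (n + 1), MeasurableSpace.comap (X i) (inferInstance : MeasurableSpace E)]
        =ᵐ[μ] fun ω => (κ n (X n ω) A).toReal)) ∧
  (∀ n (A : Set E), MeasurableSet A → ∀ᵐ ω ∂μ,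
      κ n (X n ω) A ≤ ENNReal.ofReal C * Measure.map (X (n + 1)) μ A ∧
      Measure.map (X (n + 1)) μ A ≤ ENNReal.ofReal C * κ n (X n ω) A)

/-- Partial sums `S_N = ∑_{n=1}^N f_n(X_n)`. -/
def S (X : ℕ → Ω → E) (f : ℕ → E → ℤ) (N : ℕ) (ω : Ω) : ℤ :=
  ∑ n ∈ Finset.Icc 1 N, f n (X n ω)

/-- `V_N = Var(S_N)`. -/
def VN (μ : Measure Ω) (X : ℕ → Ω → E) (f : ℕ → E → ℤ) (N : ℕ) : ℝ :=
  variance (fun ω => ((S X f N ω : ℝ))) μ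

/-- `σ_N = √V_N`. -/
def sigN (μ : Measure Ω) (X : ℕ → Ω → E) (f : ℕ → E → ℤ) (N : ℕ) : ℝ :=
  Real.sqrt (VN μ X f N)

/-- `a_N = 𝔼(S_N)`. -/
def meanS (μ : Measure Ω) (X : ℕ → Ω → E) (f : ℕ → E → ℤ) (N : ℕ) : ℝ :=
  ∫ ω, ((S X f N ω : ℝ)) ∂μ

/-- The second largest value among the (finitely many) values of `p`, counted with
multiplicity: it equals `min_j max_{j' ≠ j} p j'`. -/
def secondLargest {ι : Type*} (p : ι → ℝ) : ℝ := ⨅ j, sSup (p '' {j}ᶜ)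

/-- `q_n(m)` : the second largest value among `ℙ(Y_n ≡ j mod m)`, `j = 0,…,m-1`. -/
def qres (μ : Measure Ω) (X : ℕ → Ω → E) (f : ℕ → E → ℤ) (n m : ℕ) : ℝ :=
  secondLargest (fun j : ZMod m => (μ {ω | ((f n (X n ω) : ZMod m)) = j}).toReal)

/-- `M_N = min_{2 ≤ m ≤ 2K} ∑_{n=1}^N q_n(m)`. -/
def MN (μ : Measure Ω) (X : ℕ → Ω → E) (f : ℕ → E → ℤ) (K N : ℕ) : ℝ :=
  sInf ((fun m => ∑ n ∈ Finset.Icc 1 N, qres μ X f n m) '' (Set.Icc 2 (2 * K)))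

/-- `S_N` obeys the Edgeworth expansion of order `r` : there are polynomials `P_{b,N}`,
with coefficients uniformly bounded in `N` and degrees not depending on `N`, such that
uniformly in `k ∈ ℤ`,
`ℙ(S_N = k) = ∑_{b=1}^r σ_N^{-b} P_{b,N}(k_N) 𝔤(k_N) + o(σ_N^{-r})`
where `k_N = (k - 𝔼 S_N)/σ_N`. -/
def Edgeworth (μ : Measure Ω) (X : ℕ → Ω → E) (f : ℕ → E → ℤ) (r : ℕ) : Prop :=
  ∃ (D : ℕ) (Cb : ℝ) (P : ℕ → ℕ → Polynomial ℝ),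
    (∀ b N, (P b N).natDegree ≤ D) ∧
    (∀ b N i, |(P b N).coeff i| ≤ Cb) ∧
    ∀ ε > 0, ∃ N₀, ∀ N ≥ N₀, ∀ k : ℤ,
      |(μ {ω | S X f N ω = k}).toReal -
          ∑ b ∈ Finset.Icc 1 r, (sigN μ X f N)⁻¹ ^ b *
            (P b N).eval (((k : ℝ) - meanS μ X f N) / sigN μ X f N) *
            gaussDensity (((k : ℝ) - meanS μ X f N) / sigN μ X f N)|
        ≤ ε * (sigN μ X f N)⁻¹ ^ r

/-- The σ-algebra generated by `X_{j 1}, …, X_{j ℓ}`. -/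
def sigmaOf (X : ℕ → Ω → E) {ℓ : ℕ} (j : Fin ℓ → ℕ) : MeasurableSpace Ω :=
  ⨆ i : Fin ℓ, MeasurableSpace.comap (X (j i)) (inferInstance : MeasurableSpace E)

/-- Conditional probability of the event `s` given the σ-algebra `m`. -/
def condProb (μ : Measure Ω) (m : MeasurableSpace Ω) (s : Set Ω) : Ω → ℝ :=
  μ[s.indicator (fun _ => (1 : ℝ)) | m]

/-- `S_N` obeys the Edgeworth expansion of order `r` in a conditionally stable way:
for every `ℓ`, the order `r` Edgeworth expansion holds for the conditional law of `S_N`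
given `X_{j_1},…,X_{j_ℓ}`, with error term `o_ℓ(σ_N^{-r})` and polynomial coefficient
bounds depending only on `ℓ` (and `r`), uniformly over all choices of indices
`1 ≤ j_1,…,j_ℓ ≤ N`. -/
def CondStableEdgeworth (μ : Measure Ω) (X : ℕ → Ω → E) (f : ℕ → E → ℤ) (r : ℕ) : Prop :=
  ∀ ℓ : ℕ, ∃ (D : ℕ) (Cb : ℝ), ∀ ε > 0, ∃ N₀, ∀ N ≥ N₀,
    ∀ j : Fin ℓ → ℕ, (∀ i, j i ∈ Finset.Icc 1 N) →
      ∃ P : ℕ → Ω → Polynomial ℝ,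
        (∀ b ω, (P b ω).natDegree ≤ D) ∧
        (∀ b ω i, |(P b ω).coeff i| ≤ Cb) ∧
        ∀ᵐ ω ∂μ, ∀ k : ℤ,
          |condProb μ (sigmaOf X j) {ω' | S X f N ω' = k} ω -
              ∑ b ∈ Finset.Icc 1 r, (sigN μ X f N)⁻¹ ^ b *
                (P b ω).eval (((k : ℝ) -
                    (μ[fun ω' => ((S X f N ω' : ℝ)) | sigmaOf X j]) ω) / sigN μ X f N) *
                gaussDensity (((k : ℝ) -
                    (μ[fun ω' => ((S X f N ω' : ℝ)) | sigmaOf X j]) ω) / sigN μ X f N)|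
            ≤ ε * (sigN μ X f N)⁻¹ ^ r

/-- `t` is a resonant point: `t = 2πl/m` with `0 < m ≤ 2K`, `0 ≤ l < m`. -/
def IsResonant (K : ℕ) (t : ℝ) : Prop :=
  ∃ l m : ℕ, 0 < m ∧ m ≤ 2 * K ∧ l < m ∧ t = 2 * Real.pi * l / m

/-- The conditional characteristic function `𝔼[e^{itS_N} | X_{j_1},…,X_{j_ℓ}]`. -/
def condChar (μ : Measure Ω) (X : ℕ → Ω → E) (f : ℕ → E → ℤ) (t : ℝ) (N : ℕ)
    {ℓ : ℕ} (j : Fin ℓ → ℕ) : Ω → ℂ :=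
  μ[fun ω => Complex.exp (Complex.I * (t : ℂ) * ((S X f N ω : ℤ) : ℂ)) | sigmaOf X j]

end EdgeworthMC

namespace EdgeworthMC

variable {Ω E : Type*} [MeasurableSpace Ω] [MeasurableSpace E]

/-- The σ-algebra `𝓔` generated by `{X_n : n ∈ 𝓑}`. -/
def sigmaFinset (X : ℕ → Ω → E) (𝓑 : Finset ℕ) : MeasurableSpace Ω :=
  ⨆ n ∈ 𝓑, MeasurableSpace.comap (X n) (inferInstance : MeasurableSpace E)

/-- The set `𝓑 = 𝓑_N = {1 ≤ n ≤ N : q_n(m) ≥ εbar}` of "bad" indices. -/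
def bigSet (μ : Measure Ω) (X : ℕ → Ω → E) (f : ℕ → E → ℤ) (m N : ℕ) (ε : ℝ) :
    Finset ℕ :=
  @Finset.filter _ (fun n => ε ≤ qres μ X f n m) (Classical.decPred _) (Finset.Icc 1 N)

/-- The conditional variance `Var(g | m) = 𝔼[g² | m] - (𝔼[g | m])²`. -/
def condVar (μ : Measure Ω) (m : MeasurableSpace Ω) (g : Ω → ℝ) : Ω → ℝ :=
  fun ω => (μ[fun ω' => (g ω') ^ 2 | m]) ω - ((μ[g | m]) ω) ^ 2

/-- A function whose integrals over the sets of `m` are nonnegative has a nonnegative conditional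
expectation given `m`. -/
theorem condExp_nonneg_of_setIntegral_nonneg {α : Type*} {m m₀ : MeasurableSpace α}
    {μ : Measure α} [IsFiniteMeasure μ] (hm : m ≤ m₀) {g : α → ℝ} (hg : Integrable g μ)
    (h : ∀ A, MeasurableSet[m] A → 0 ≤ ∫ x in A, g x ∂μ) : 0 ≤ᵐ[μ] μ[g | m] := by
  refine ae_le_of_ae_le_trim (hm := hm) ?_
  refine ae_nonneg_of_forall_setIntegral_nonneg
    (integrable_condExp.trim hm stronglyMeasurable_condExp) fun A hA _ => ?_
  rw [← setIntegral_trim hm stronglyMeasurable_condExp hA, setIntegral_condExp hm hg hA]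
  exact h A hA

/-- The sets `{x | x ∈ H (p x)}` with `p` an `m₁`-measurable countable partition and every `H n`
in `m₂`. -/
def partitionAlgebra {α : Type*} (m₁ m₂ : MeasurableSpace α) : Set (Set α) :=
  {A | ∃ (p : α → ℕ) (H : ℕ → Set α), Measurable[m₁] p ∧ (∀ n, MeasurableSet[m₂] (H n)) ∧
    A = {x | x ∈ H (p x)}}

theorem isSetAlgebra_partitionAlgebra {α : Type*} (m₁ m₂ : MeasurableSpace α) :
    IsSetAlgebra (partitionAlgebra m₁ m₂) where
  empty_mem := ⟨fun _ => 0, fun _ => ∅, @measurable_const _ _ _ m₁ _,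
    fun _ => @MeasurableSet.empty _ m₂, by simp⟩
  compl_mem := by
    rintro _ ⟨p, H, hp, hH, rfl⟩
    exact ⟨p, fun n => (H n)ᶜ, hp, fun n => (hH n).compl, by ext; simp⟩
  union_mem := by
    rintro _ _ ⟨p, H, hp, hH, rfl⟩ ⟨p', H', hp', hH', rfl⟩
    refine ⟨fun x => Nat.pair (p x) (p' x), fun n => H n.unpair.1 ∪ H' n.unpair.2, ?_,
      fun n => (hH _).union (hH' _), by ext; simp⟩
    exact (measurable_of_countable (fun q : ℕ × ℕ => Nat.pair q.1 q.2)).comp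
      (@Measurable.prodMk _ m₁ _ _ _ _ _ _ hp hp')

theorem generateFrom_partitionAlgebra {α : Type*} (m₁ m₂ : MeasurableSpace α) :
    m₁ ⊔ m₂ = MeasurableSpace.generateFrom (partitionAlgebra m₁ m₂) := by
  classical
  apply le_antisymm
  · refine sup_le (fun A hA => ?_) (fun A hA => ?_)
    · refine MeasurableSpace.measurableSet_generateFrom
        ⟨fun x => if x ∈ A then 1 else 0, fun n => if n = 1 then Set.univ else ∅, ?_, ?_, ?_⟩
      · exact @Measurable.ite _ _ _ _ m₁ _ _ _ hA (@measurable_const _ _ _ m₁ _)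
          (@measurable_const _ _ _ m₁ _)
      · intro n
        dsimp only
        split_ifs
        · exact @MeasurableSet.univ _ m₂
        · exact @MeasurableSet.empty _ m₂
      · ext x
        by_cases hx : x ∈ A <;> simp [hx]
    · exact MeasurableSpace.measurableSet_generateFrom
        ⟨fun _ => 0, fun _ => A, @measurable_const _ _ _ m₁ _, fun _ => hA, rfl⟩
  · refine MeasurableSpace.generateFrom_le ?_
    rintro _ ⟨p, H, hp, hH, rfl⟩
    have : {x | x ∈ H (p x)} = ⋃ n, (p ⁻¹' {n} ∩ H n) := by ext; simp
    rw [this]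
    refine @MeasurableSet.iUnion _ _ (m₁ ⊔ m₂) _ _ fun n =>
      @MeasurableSet.inter _ (m₁ ⊔ m₂) _ _ ?_ ?_
    · exact (le_sup_left : m₁ ≤ m₁ ⊔ m₂) _ (hp (measurableSet_singleton n))
    · exact (le_sup_right : m₂ ≤ m₁ ⊔ m₂) _ (hH n)

/-- Nonnegativity of the integrals of a bounded function over the sets `A₁ ∩ A₂` with `Aᵢ ∈ mᵢ`
extends to all the sets of `m₁ ⊔ m₂`. -/
theorem setIntegral_nonneg_of_inter {α : Type*} {m₁ m₂ m₀ : MeasurableSpace α}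
    {μ : Measure α} [IsFiniteMeasure μ] (h₁ : m₁ ≤ m₀) (h₂ : m₂ ≤ m₀) {g : α → ℝ}
    (hg : Integrable g μ) {L : ℝ} (hL : ∀ᵐ x ∂μ, |g x| ≤ L)
    (h : ∀ A₁ A₂, MeasurableSet[m₁] A₁ → MeasurableSet[m₂] A₂ → 0 ≤ ∫ x in A₁ ∩ A₂, g x ∂μ)
    {A : Set α} (hA : MeasurableSet[m₁ ⊔ m₂] A) : 0 ≤ ∫ x in A, g x ∂μ := by
  have hm : m₁ ⊔ m₂ ≤ m₀ := sup_le h₁ h₂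
  have hdense := @Measure.MeasureDense.of_generateFrom_isSetAlgebra_finite _ (m₁ ⊔ m₂)
    (μ.trim hm) _ _ (isSetAlgebra_partitionAlgebra m₁ m₂) (generateFrom_partitionAlgebra m₁ m₂)
  have halg : ∀ t ∈ partitionAlgebra m₁ m₂, 0 ≤ ∫ x in t, g x ∂μ := by
    rintro _ ⟨p, H, hp, hH, rfl⟩
    have : {x | x ∈ H (p x)} = ⋃ n, (p ⁻¹' {n} ∩ H n) := by ext; simp
    rw [this, integral_iUnion]
    · exact tsum_nonneg fun n => h _ _ (hp (measurableSet_singleton n)) (hH n)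
    · exact fun n => (h₁ _ (hp (measurableSet_singleton n))).inter (h₂ _ (hH n))
    · intro i j hij
      refine Set.disjoint_left.2 fun x hx hx' => hij ?_
      exact hx.1.symm.trans hx'.1
    · exact hg.integrableOn
  have hAm : MeasurableSet[m₀] A := hm _ hA
  refine le_of_forall_pos_le_add fun ε hε => ?_
  have hL' : 0 < |L| + 1 := by positivity
  obtain ⟨t, ht, hlt⟩ := @Measure.MeasureDense.approx _ (m₁ ⊔ m₂) _ _ hdense A hA
    (@measure_ne_top _ (m₁ ⊔ m₂) _ _ _) (ε / (|L| + 1)) (by positivity)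
  have ht' : MeasurableSet[m₁ ⊔ m₂] t :=
    @Measure.MeasureDense.measurable _ (m₁ ⊔ m₂) _ _ hdense t ht
  have htm : MeasurableSet[m₀] t := hm _ ht'
  rw [trim_measurableSet_eq (s := symmDiff A t) hm ((hA.diff ht').union (ht'.diff hA))] at hlt
  have hreal : μ.real (symmDiff A t) ≤ ε / (|L| + 1) :=
    ENNReal.toReal_le_of_le_ofReal (by positivity) hlt.le
  have bound : ∀ s, MeasurableSet[m₀] s → |∫ x in s, g x ∂μ| ≤ L * μ.real s := by
    intro s hs
    have h := norm_setIntegral_le_of_norm_le_const_ae' (f := g) (C := L) (measure_lt_top μ s)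
      (hL.mono fun x hx _ => hx)
    simpa [Real.norm_eq_abs] using h
  have e₁ := integral_inter_add_sdiff (μ := μ) (f := g) (s := A) htm hg.integrableOn
  have e₂ := integral_inter_add_sdiff (μ := μ) (f := g) (s := t) hAm hg.integrableOn
  rw [Set.inter_comm] at e₂
  have b₁ := bound (A \ t) (hAm.diff htm)
  have b₂ := bound (t \ A) (htm.diff hAm)
  have hsum : μ.real (symmDiff A t) = μ.real (A \ t) + μ.real (t \ A) :=
    measureReal_union (Set.disjoint_left.2 fun x hx hx' => hx.2 hx'.1) (htm.diff hAm)
  have := halg t ht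
  have key : (|L| + 1) * μ.real (symmDiff A t) ≤ ε := by
    rwa [le_div_iff₀ hL', mul_comm] at hreal
  have n₁ : 0 ≤ μ.real (A \ t) := measureReal_nonneg
  have n₂ : 0 ≤ μ.real (t \ A) := measureReal_nonneg
  nlinarith [abs_le.1 b₁, abs_le.1 b₂, le_abs_self L, mul_le_mul_of_nonneg_right (le_abs_self L) n₁,
    mul_le_mul_of_nonneg_right (le_abs_self L) n₂]

/-- If `μ (A₁ ∩ A₂) ≥ a μ A₁ μ A₂` for all `Aᵢ ∈ mᵢ`, then `𝔼(φ | m₂) ≥ a 𝔼 φ` for every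
nonnegative `m₁`-measurable `φ`. -/
theorem le_condExp_of_measure_inter {α : Type*} {m₁ m₂ m₀ : MeasurableSpace α}
    {μ : Measure α} [IsProbabilityMeasure μ] (h₁ : m₁ ≤ m₀) (h₂ : m₂ ≤ m₀) {a : ℝ}
    (h : ∀ A₁ A₂, MeasurableSet[m₁] A₁ → MeasurableSet[m₂] A₂ →
      a * μ.real A₁ * μ.real A₂ ≤ μ.real (A₁ ∩ A₂))
    {φ : α → ℝ} (hφ : StronglyMeasurable[m₁] φ) (hint : Integrable φ μ) (h0 : 0 ≤ᵐ[μ] φ) :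
    ∀ᵐ x ∂μ, a * ∫ y, φ y ∂μ ≤ (μ[φ | m₂]) x := by
  have key : ∀ A₂, MeasurableSet[m₂] A₂ → a * μ.real A₂ * ∫ y, φ y ∂μ ≤ ∫ y in A₂, φ y ∂μ := by
    intro A₂ hA₂
    by_cases ha : a < 0
    · refine le_trans ?_ (setIntegral_nonneg_of_ae h0)
      have : 0 ≤ ∫ y, φ y ∂μ := integral_nonneg_of_ae h0
      have h3 : 0 ≤ μ.real A₂ * ∫ y, φ y ∂μ := mul_nonneg measureReal_nonneg this
      nlinarith
    push Not at ha
    have hle : (ENNReal.ofReal (a * μ.real A₂) • μ).trim h₁ ≤ (μ.restrict A₂).trim h₁ := by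
      refine Measure.le_iff.2 fun A₁ hA₁ => ?_
      rw [trim_measurableSet_eq h₁ hA₁, trim_measurableSet_eq h₁ hA₁,
        Measure.restrict_apply (h₁ _ hA₁), Measure.smul_apply, smul_eq_mul,
        ← ofReal_measureReal (μ := μ) (s := A₁), ← ofReal_measureReal (μ := μ) (s := A₁ ∩ A₂),
        ← ENNReal.ofReal_mul (by positivity)]
      exact ENNReal.ofReal_le_ofReal (by linarith [h A₁ A₂ hA₁ hA₂])
    have h0t : 0 ≤ᵐ[(μ.restrict A₂).trim h₁] φ := by
      refine StronglyMeasurable.ae_le_trim_of_stronglyMeasurable h₁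
        (@stronglyMeasurable_zero _ _ m₁ _ _) hφ ?_
      exact ae_restrict_of_ae h0
    have := integral_mono_measure hle h0t (hint.restrict.trim h₁ hφ)
    rw [← integral_trim h₁ hφ, ← integral_trim h₁ hφ, integral_smul_measure,
      ENNReal.toReal_ofReal (by positivity)] at this
    simpa using this
  have hn := condExp_nonneg_of_setIntegral_nonneg h₂ (hint.sub (integrable_const (a * ∫ y, φ y ∂μ)))
    (fun A hA => by
      have := key A hA
      have e : ∫ x in A, (φ - fun _ => (a * ∫ y, φ y ∂μ : ℝ) : α → ℝ) x ∂μ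
          = ∫ x in A, φ x ∂μ - μ.real A * (a * ∫ y, φ y ∂μ) := by
        simp only [Pi.sub_apply]
        rw [integral_sub hint.integrableOn (integrable_const _).integrableOn, setIntegral_const,
          smul_eq_mul]
      rw [e]
      linarith)
  filter_upwards [hn, condExp_sub hint (integrable_const (a * ∫ y, φ y ∂μ)) m₂] with x hx hx'
  rw [hx', Pi.sub_apply, condExp_const h₂] at hx
  simpa using hx

/-- If `μ (A₁ ∩ A₂) ≤ b μ A₁ μ A₂` for all `Aᵢ ∈ mᵢ`, then `𝔼(φ | m₂) ≤ b 𝔼 φ` for every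
nonnegative `m₁`-measurable `φ`. -/
theorem condExp_le_of_measure_inter {α : Type*} {m₁ m₂ m₀ : MeasurableSpace α}
    {μ : Measure α} [IsProbabilityMeasure μ] (h₁ : m₁ ≤ m₀) (h₂ : m₂ ≤ m₀) {b : ℝ} (hb : 0 ≤ b)
    (h : ∀ A₁ A₂, MeasurableSet[m₁] A₁ → MeasurableSet[m₂] A₂ →
      μ.real (A₁ ∩ A₂) ≤ b * μ.real A₁ * μ.real A₂)
    {φ : α → ℝ} (hφ : StronglyMeasurable[m₁] φ) (hint : Integrable φ μ) (h0 : 0 ≤ᵐ[μ] φ) :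
    ∀ᵐ x ∂μ, (μ[φ | m₂]) x ≤ b * ∫ y, φ y ∂μ := by
  have key : ∀ A₂, MeasurableSet[m₂] A₂ → ∫ y in A₂, φ y ∂μ ≤ b * μ.real A₂ * ∫ y, φ y ∂μ := by
    intro A₂ hA₂
    have hle : (μ.restrict A₂).trim h₁ ≤ (ENNReal.ofReal (b * μ.real A₂) • μ).trim h₁ := by
      refine Measure.le_iff.2 fun A₁ hA₁ => ?_
      rw [trim_measurableSet_eq h₁ hA₁, trim_measurableSet_eq h₁ hA₁,
        Measure.restrict_apply (h₁ _ hA₁), Measure.smul_apply, smul_eq_mul,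
        ← ofReal_measureReal (μ := μ) (s := A₁), ← ofReal_measureReal (μ := μ) (s := A₁ ∩ A₂),
        ← ENNReal.ofReal_mul (by positivity)]
      exact ENNReal.ofReal_le_ofReal (by linarith [h A₁ A₂ hA₁ hA₂])
    have h0t : 0 ≤ᵐ[(ENNReal.ofReal (b * μ.real A₂) • μ).trim h₁] φ := by
      refine StronglyMeasurable.ae_le_trim_of_stronglyMeasurable h₁
        (@stronglyMeasurable_zero _ _ m₁ _ _) hφ ?_
      exact Measure.ae_smul_measure h0 _
    have := integral_mono_measure hle h0t ((hint.smul_measure ENNReal.ofReal_ne_top).trim h₁ hφ)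
    rw [← integral_trim h₁ hφ, ← integral_trim h₁ hφ, integral_smul_measure,
      ENNReal.toReal_ofReal (by positivity)] at this
    simpa using this
  have hn := condExp_nonneg_of_setIntegral_nonneg h₂
    ((integrable_const (b * ∫ y, φ y ∂μ)).sub hint)
    (fun A hA => by
      have := key A hA
      have e : ∫ x in A, ((fun _ => (b * ∫ y, φ y ∂μ : ℝ)) - φ : α → ℝ) x ∂μ
          = μ.real A * (b * ∫ y, φ y ∂μ) - ∫ x in A, φ x ∂μ := by
        simp only [Pi.sub_apply]
        rw [integral_sub (integrable_const _).integrableOn hint.integrableOn, setIntegral_const,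
          smul_eq_mul]
      rw [e]
      linarith)
  filter_upwards [hn, condExp_sub (integrable_const (b * ∫ y, φ y ∂μ)) hint m₂] with x hx hx'
  rw [hx', Pi.sub_apply, condExp_const h₂] at hx
  simpa using hx

theorem sigmaFinset_le {X : ℕ → Ω → E} (hX : ∀ n, Measurable (X n)) (B : Finset ℕ) :
    sigmaFinset X B ≤ ‹MeasurableSpace Ω› :=
  iSup₂_le fun n _ => (hX n).comap_le

theorem comap_le_sigmaFinset (X : ℕ → Ω → E) {B : Finset ℕ} {n : ℕ} (h : n ∈ B) :
    MeasurableSpace.comap (X n) (inferInstance : MeasurableSpace E) ≤ sigmaFinset X B :=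
  le_iSup₂_of_le n h le_rfl

theorem sigmaFinset_mono (X : ℕ → Ω → E) {B B' : Finset ℕ} (h : B ⊆ B') :
    sigmaFinset X B ≤ sigmaFinset X B' :=
  iSup₂_le fun _ hn => comap_le_sigmaFinset X (h hn)

theorem sigmaFinset_union (X : ℕ → Ω → E) (B B' : Finset ℕ) :
    sigmaFinset X (B ∪ B') = sigmaFinset X B ⊔ sigmaFinset X B' := by
  simp only [sigmaFinset, Finset.iSup_union]

theorem sigmaFinset_singleton (X : ℕ → Ω → E) (n : ℕ) :
    sigmaFinset X {n} = MeasurableSpace.comap (X n) (inferInstance : MeasurableSpace E) := by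
  simp [sigmaFinset]

theorem sigmaFinset_empty (X : ℕ → Ω → E) : sigmaFinset X ∅ = ⊥ := by
  simp [sigmaFinset]

theorem iSup_fin_comap_eq (X : ℕ → Ω → E) (n : ℕ) :
    (⨆ i : Fin (n + 1), MeasurableSpace.comap (X i) (inferInstance : MeasurableSpace E))
      = sigmaFinset X (Finset.range (n + 1)) := by
  apply le_antisymm
  · exact iSup_le fun i => comap_le_sigmaFinset X (Finset.mem_range.2 i.2)
  · exact iSup₂_le fun i hi => le_iSup_of_le (⟨i, Finset.mem_range.1 hi⟩ : Fin (n + 1)) le_rfl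

section Chain

variable {μ : Measure Ω} {X : ℕ → Ω → E} {κ : ℕ → Kernel E E} {C : ℝ}

/-- The one-step transition formula tested against bounded functions of the past. -/
theorem UEChain.integral_mul_indicator_succ (hchain : UEChain μ X κ C) {k : ℕ} {ψ : Ω → ℝ}
    (hψ : StronglyMeasurable[sigmaFinset X (Finset.range (k + 1))] ψ) {c : ℝ}
    (hc : ∀ᵐ ω ∂μ, ‖ψ ω‖ ≤ c) {A : Set E} (hA : MeasurableSet A) :
    ∫ ω, ψ ω * A.indicator (fun _ => (1 : ℝ)) (X (k + 1) ω) ∂μ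
      = ∫ ω, ψ ω * (κ k (X k ω) A).toReal ∂μ := by
  obtain ⟨hμ, hX, -, htr, -⟩ := hchain
  have hm := sigmaFinset_le hX (Finset.range (k + 1))
  have hint : Integrable (fun ω => A.indicator (fun _ => (1 : ℝ)) (X (k + 1) ω)) μ :=
    (integrable_const (1 : ℝ)).indicator (hX (k + 1) hA)
  have htr' := htr k A hA
  rw [iSup_fin_comap_eq] at htr'
  have hpull := condExp_stronglyMeasurable_mul_of_bound hm hψ hint c hc
  change ∫ ω, (ψ * fun ω => A.indicator (fun _ => (1 : ℝ)) (X (k + 1) ω)) ω ∂μ = _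
  rw [← integral_condExp hm]
  refine integral_congr_ae ?_
  filter_upwards [hpull, htr'] with ω h₁ h₂
  rw [h₁, Pi.mul_apply, h₂]

theorem indicator_comp_eq (X : ℕ → Ω → E) (n : ℕ) (A : Set E) (ω : Ω) :
    A.indicator (fun _ => (1 : ℝ)) (X n ω) = (X n ⁻¹' A).indicator (fun _ => (1 : ℝ)) ω := rfl

theorem stronglyMeasurable_kernel_comp {k : ℕ} {B : Finset ℕ}
    (hk : k ∈ B) {A : Set E} (hA : MeasurableSet A) :
    StronglyMeasurable[sigmaFinset X B] fun ω => (κ k (X k ω) A).toReal := by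
  have h : Measurable fun x => (κ k x A).toReal := ((κ k).measurable_coe hA).ennreal_toReal
  exact (h.comp ((comap_measurable (X k)).mono
    (comap_le_sigmaFinset X hk) le_rfl)).stronglyMeasurable

/-- Uniform ellipticity in bilinear form: the past and the next state. -/
theorem UEChain.one_step (hchain : UEChain μ X κ C) (hC : 1 < C) {k : ℕ} {D A : Set Ω}
    (hD : MeasurableSet[sigmaFinset X (Finset.range (k + 1))] D)
    (hA : MeasurableSet[sigmaFinset X {k + 1}] A) :
    C⁻¹ * μ.real D * μ.real A ≤ μ.real (D ∩ A) ∧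
      μ.real (D ∩ A) ≤ C * μ.real D * μ.real A := by
  have hμ := hchain.1
  have hX := hchain.2.1
  have hκ := hchain.2.2.1
  rw [sigmaFinset_singleton] at hA
  obtain ⟨A, hA, rfl⟩ := hA
  have hDm := sigmaFinset_le hX _ _ hD
  have hC0 : 0 < C := by linarith
  have h := hchain.integral_mul_indicator_succ (ψ := D.indicator fun _ => (1 : ℝ)) (c := 1)
    ((@stronglyMeasurable_const _ _ (sigmaFinset X (Finset.range (k + 1))) _ _).indicator hD)
    (Eventually.of_forall fun ω => by
      by_cases hω : ω ∈ D <;> simp [hω]) hA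
  have hl : ∫ ω, D.indicator (fun _ => (1 : ℝ)) ω * A.indicator (fun _ => (1 : ℝ)) (X (k + 1) ω) ∂μ
      = μ.real (D ∩ X (k + 1) ⁻¹' A) := by
    rw [← integral_indicator_one (hDm.inter (hX _ hA))]
    refine integral_congr_ae (Eventually.of_forall fun ω => ?_)
    dsimp only
    rw [indicator_comp_eq]
    by_cases h₁ : ω ∈ D <;> by_cases h₂ : ω ∈ X (k + 1) ⁻¹' A <;> simp [h₁, h₂]
  have hr : ∫ ω, D.indicator (fun _ => (1 : ℝ)) ω * (κ k (X k ω) A).toReal ∂μ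
      = ∫ ω in D, (κ k (X k ω) A).toReal ∂μ := by
    rw [← integral_indicator hDm]
    refine integral_congr_ae (Eventually.of_forall fun ω => ?_)
    by_cases h₁ : ω ∈ D <;> simp [h₁]
  rw [hl, hr] at h
  rw [h]
  have hell := hchain.2.2.2.2 k A hA
  have hle1 : ∀ ω, (κ k (X k ω) A).toReal ≤ 1 := fun ω => measureReal_le_one
  have hsm : Measurable fun ω => (κ k (X k ω) A).toReal :=
    (((κ k).measurable_coe hA).ennreal_toReal).comp (hX k)
  have hint : Integrable (fun ω => (κ k (X k ω) A).toReal) μ :=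
    Integrable.of_bound hsm.aestronglyMeasurable 1 (Eventually.of_forall fun ω => by
      rw [Real.norm_of_nonneg ENNReal.toReal_nonneg]; exact hle1 ω)
  have hae : ∀ᵐ ω ∂μ, (κ k (X k ω) A).toReal ≤ C * μ.real (X (k + 1) ⁻¹' A) ∧
      C⁻¹ * μ.real (X (k + 1) ⁻¹' A) ≤ (κ k (X k ω) A).toReal := by
    filter_upwards [hell] with ω hω
    rw [Measure.map_apply (hX _) hA] at hω
    constructor
    · have := ENNReal.toReal_mono (ENNReal.mul_ne_top ENNReal.ofReal_ne_top (measure_ne_top _ _))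
        hω.1
      rwa [ENNReal.toReal_mul, ENNReal.toReal_ofReal hC0.le] at this
    · have := ENNReal.toReal_mono (ENNReal.mul_ne_top ENNReal.ofReal_ne_top (measure_ne_top _ _))
        hω.2
      rw [ENNReal.toReal_mul, ENNReal.toReal_ofReal hC0.le] at this
      rwa [inv_mul_le_iff₀ hC0]
  constructor
  · have := setIntegral_mono_ae (s := D)
      (integrable_const (C⁻¹ * μ.real (X (k + 1) ⁻¹' A))).integrableOn
      hint.integrableOn (hae.mono fun ω h => h.2)
    rw [setIntegral_const, smul_eq_mul] at this
    linarith
  · have := setIntegral_mono_ae (s := D) hint.integrableOn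
      (integrable_const (C * μ.real (X (k + 1) ⁻¹' A))).integrableOn (hae.mono fun ω h => h.1)
    rw [setIntegral_const, smul_eq_mul] at this
    linarith

theorem abs_condExp_indicator_le_one {m : MeasurableSpace Ω} (D : Set Ω) :
    ∀ᵐ ω ∂μ, |(μ[D.indicator (fun _ => (1 : ℝ)) | m]) ω| ≤ 1 := by
  refine ae_bdd_abs_condExp_of_ae_bdd_abs (Eventually.of_forall fun ω => ?_)
  by_cases hω : ω ∈ D <;> simp [hω]

/-- The Markov property: given the state at time `l`, the past is independent of the future. -/
theorem UEChain.condExp_future (hchain : UEChain μ X κ C) {l : ℕ} {D : Set Ω}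
    (hD : MeasurableSet[sigmaFinset X (Finset.range (l + 1))] D) (r : ℕ) :
    μ[D.indicator (fun _ => (1 : ℝ)) | sigmaFinset X (Finset.Icc l (l + r))]
      =ᵐ[μ] μ[D.indicator (fun _ => (1 : ℝ)) | sigmaFinset X {l}] := by
  have hμ := hchain.1
  have hX := hchain.2.1
  have hκ := hchain.2.2.1
  have hDm := sigmaFinset_le hX _ _ hD
  have hint1 : Integrable (D.indicator fun _ => (1 : ℝ)) μ :=
    (integrable_const (1 : ℝ)).indicator hDm
  set φ := μ[D.indicator (fun _ => (1 : ℝ)) | sigmaFinset X {l}] with hφ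
  have hφsm : StronglyMeasurable[sigmaFinset X {l}] φ := stronglyMeasurable_condExp
  have hφint : Integrable φ μ := integrable_condExp
  set g : Ω → ℝ := D.indicator (fun _ => (1 : ℝ)) - φ with hg
  have hgint : Integrable g μ := hint1.sub hφint
  have hgb : ∀ᵐ ω ∂μ, |g ω| ≤ 2 := by
    filter_upwards [abs_condExp_indicator_le_one (μ := μ) (m := sigmaFinset X {l}) D] with ω hω
    have h1 : |D.indicator (fun _ => (1 : ℝ)) ω| ≤ 1 := by
      by_cases hω : ω ∈ D <;> simp [hω]
    calc |g ω| ≤ |D.indicator (fun _ => (1 : ℝ)) ω| + |φ ω| := abs_sub _ _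
      _ ≤ 2 := by linarith
  have hlr : ∀ r, sigmaFinset X {l} ≤ sigmaFinset X (Finset.Icc l (l + r)) := fun r =>
    sigmaFinset_mono X (by simp)
  have key : ∀ r A, MeasurableSet[sigmaFinset X (Finset.Icc l (l + r))] A →
      ∫ ω in A, g ω ∂μ = 0 := by
    intro r
    induction r with
    | zero =>
      intro A hA
      rw [add_zero, Finset.Icc_self] at hA
      simp only [hg, Pi.sub_apply]
      rw [integral_sub hint1.integrableOn hφint.integrableOn, hφ,
        setIntegral_condExp (sigmaFinset_le hX _) hint1 hA, sub_self]
    | succ r ih =>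
      intro A hA
      have hm := sigmaFinset_le hX (Finset.Icc l (l + r))
      have hzero : μ[g | sigmaFinset X (Finset.Icc l (l + r))] =ᵐ[μ] 0 := by
        symm
        refine ae_eq_condExp_of_forall_setIntegral_eq hm hgint (fun _ _ _ => integrableOn_zero)
          (fun s hs _ => ?_) aestronglyMeasurable_zero
        rw [ih s hs]
        simp
      have hunion : Finset.Icc l (l + (r + 1)) = Finset.Icc l (l + r) ∪ {l + r + 1} := by
        ext x
        simp only [Finset.mem_Icc, Finset.mem_union, Finset.mem_singleton]
        omega
      rw [hunion, sigmaFinset_union] at hA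
      have hrect : ∀ A₁ A₂, MeasurableSet[sigmaFinset X (Finset.Icc l (l + r))] A₁ →
          MeasurableSet[sigmaFinset X {l + r + 1}] A₂ → ∫ ω in A₁ ∩ A₂, g ω ∂μ = 0 := by
        intro A₁ A₂ hA₁ hA₂
        rw [sigmaFinset_singleton] at hA₂
        obtain ⟨A₂, hA₂, rfl⟩ := hA₂
        have hA₁m := hm _ hA₁
        have hgsm : StronglyMeasurable[sigmaFinset X (Finset.range (l + r + 1))] g := by
          refine StronglyMeasurable.sub ?_ ?_
          · refine StronglyMeasurable.indicator (@stronglyMeasurable_const _ _ _ _ _) ?_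
            exact sigmaFinset_mono X (Finset.range_mono (by omega)) _ hD
          · exact hφsm.mono (sigmaFinset_mono X (by simp))
        have hA₁' : MeasurableSet[sigmaFinset X (Finset.range (l + r + 1))] A₁ :=
          sigmaFinset_mono X (fun x hx => by
            simp only [Finset.mem_Icc, Finset.mem_range] at *; omega) _ hA₁
        have h1 := hchain.integral_mul_indicator_succ (k := l + r) (hgsm.indicator hA₁') (c := 2)
          (hgb.mono fun ω hω => (norm_indicator_le_norm_self _ _).trans hω) hA₂
        have e1 : ∫ ω, A₁.indicator g ω * A₂.indicator (fun _ => (1 : ℝ)) (X (l + r + 1) ω) ∂μ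
            = ∫ ω in A₁ ∩ X (l + r + 1) ⁻¹' A₂, g ω ∂μ := by
          rw [← integral_indicator (hA₁m.inter (hX _ hA₂))]
          refine integral_congr_ae (Eventually.of_forall fun ω => ?_)
          dsimp only
          rw [indicator_comp_eq]
          by_cases h₁ : ω ∈ A₁ <;> by_cases h₂ : ω ∈ X (l + r + 1) ⁻¹' A₂ <;> simp [h₁, h₂]
        have hwsm : StronglyMeasurable[sigmaFinset X (Finset.Icc l (l + r))]
            (A₁.indicator fun ω => (κ (l + r) (X (l + r) ω) A₂).toReal) :=
          (stronglyMeasurable_kernel_comp (by simp) hA₂).indicator hA₁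
        have hpull := condExp_stronglyMeasurable_mul_of_bound hm hwsm hgint 1
          (Eventually.of_forall fun ω => (norm_indicator_le_norm_self _ _).trans (by
            rw [Real.norm_of_nonneg ENNReal.toReal_nonneg]; exact measureReal_le_one))
        have e2 : ∫ ω, A₁.indicator g ω * (κ (l + r) (X (l + r) ω) A₂).toReal ∂μ = 0 := by
          have : (fun ω => A₁.indicator g ω * (κ (l + r) (X (l + r) ω) A₂).toReal)
              = (A₁.indicator fun ω => (κ (l + r) (X (l + r) ω) A₂).toReal) * g := by
            ext ω
            by_cases h₁ : ω ∈ A₁ <;> simp [h₁, mul_comm]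
          rw [this, ← integral_condExp hm]
          refine integral_eq_zero_of_ae ?_
          filter_upwards [hpull, hzero] with ω h₁ h₂
          rw [h₁, Pi.mul_apply, h₂]
          simp
        rw [← e1, h1, e2]
      apply le_antisymm
      · have := setIntegral_nonneg_of_inter hm (sigmaFinset_le hX _) hgint.neg (L := 2)
          (hgb.mono fun ω h => by simpa using h) (fun A₁ A₂ h₁ h₂ => by
            simp only [Pi.neg_apply]
            rw [integral_neg, hrect A₁ A₂ h₁ h₂, neg_zero]) hA
        simp only [Pi.neg_apply] at this
        rw [integral_neg] at this
        linarith
      · exact setIntegral_nonneg_of_inter hm (sigmaFinset_le hX _) hgint hgb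
          (fun A₁ A₂ h₁ h₂ => (hrect A₁ A₂ h₁ h₂).ge) hA
  symm
  refine ae_eq_condExp_of_forall_setIntegral_eq (sigmaFinset_le hX _) hint1
    (fun _ _ _ => hφint.integrableOn) (fun s hs _ => ?_)
    (hφsm.mono (hlr r)).aestronglyMeasurable
  have := key r s hs
  simp only [hg, Pi.sub_apply] at this
  rw [integral_sub hint1.integrableOn hφint.integrableOn] at this
  linarith

/-- Geometric decay of the influence of the past on the state at a later time. -/
theorem UEChain.abs_condExp_sub_le (hchain : UEChain μ X κ C) (hC : 1 < C) {k : ℕ} {D : Set Ω}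
    (hD : MeasurableSet[sigmaFinset X (Finset.range (k + 1))] D) (r : ℕ) :
    ∀ᵐ ω ∂μ, |(μ[D.indicator (fun _ => (1 : ℝ)) | sigmaFinset X {k + 1 + r}]) ω - μ.real D|
      ≤ C * (1 - C⁻¹) ^ r * μ.real D := by
  have hμ := hchain.1
  have hX := hchain.2.1
  have hDm := sigmaFinset_le hX _ _ hD
  have hP : 0 ≤ μ.real D := measureReal_nonneg
  have hC0 : 0 < C := by linarith
  have hCinv : 0 < C⁻¹ := inv_pos.2 hC0
  have hint1 : Integrable (D.indicator fun _ => (1 : ℝ)) μ :=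
    (integrable_const (1 : ℝ)).indicator hDm
  have hmean : ∫ ω, D.indicator (fun _ => (1 : ℝ)) ω ∂μ = μ.real D := integral_indicator_one hDm
  induction r with
  | zero =>
    have hsm : StronglyMeasurable[sigmaFinset X (Finset.range (k + 1))]
        (D.indicator fun _ => (1 : ℝ)) :=
      StronglyMeasurable.indicator (@stronglyMeasurable_const _ _ _ _ _) hD
    have h0 : 0 ≤ᵐ[μ] (D.indicator fun _ => (1 : ℝ)) :=
      Eventually.of_forall fun ω => Set.indicator_nonneg (fun _ _ => zero_le_one) ω
    have hlow := le_condExp_of_measure_inter (μ := μ) (sigmaFinset_le hX (Finset.range (k + 1)))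
      (sigmaFinset_le hX {k + 1}) (fun A₁ A₂ h₁ h₂ => (hchain.one_step hC h₁ h₂).1) hsm hint1 h0
    have hup := condExp_le_of_measure_inter (μ := μ) (sigmaFinset_le hX (Finset.range (k + 1)))
      (sigmaFinset_le hX {k + 1}) hC0.le (fun A₁ A₂ h₁ h₂ => (hchain.one_step hC h₁ h₂).2)
      hsm hint1 h0
    filter_upwards [hlow, hup] with ω h₁ h₂
    rw [hmean] at h₁ h₂
    rw [add_zero, pow_zero, mul_one, abs_le]
    constructor <;> nlinarith [mul_nonneg hCinv.le hP, mul_nonneg (sub_nonneg.2 hC.le) hP]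
  | succ r ih =>
    set l := k + 1 + r with hl
    set φ := μ[D.indicator (fun _ => (1 : ℝ)) | sigmaFinset X {l}] with hφ
    have hφsm : StronglyMeasurable[sigmaFinset X {l}] φ := stronglyMeasurable_condExp
    have hφint : Integrable φ μ := integrable_condExp
    have hφmean : ∫ ω, φ ω ∂μ = μ.real D := by
      rw [hφ, integral_condExp (sigmaFinset_le hX _), hmean]
    set ε := C * (1 - C⁻¹) ^ r * μ.real D with hε
    have hDl : MeasurableSet[sigmaFinset X (Finset.range (l + 1))] D :=
      sigmaFinset_mono X (Finset.range_mono (by omega)) _ hD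
    have htower : μ[D.indicator (fun _ => (1 : ℝ)) | sigmaFinset X {l + 1}]
        =ᵐ[μ] μ[φ | sigmaFinset X {l + 1}] :=
      (condExp_condExp_of_le (sigmaFinset_mono X (B := {l + 1}) (B' := Finset.Icc l (l + 1))
        (by simp)) (sigmaFinset_le hX _)).symm.trans
        (condExp_congr_ae (hchain.condExp_future hDl 1))
    have hpair : ∀ A₁ A₂, MeasurableSet[sigmaFinset X {l}] A₁ →
        MeasurableSet[sigmaFinset X {l + 1}] A₂ →
        C⁻¹ * μ.real A₁ * μ.real A₂ ≤ μ.real (A₁ ∩ A₂) := fun A₁ A₂ h₁ h₂ =>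
      (hchain.one_step hC (sigmaFinset_mono X (by simp) _ h₁) h₂).1
    have hlow := le_condExp_of_measure_inter (μ := μ) (sigmaFinset_le hX _) (sigmaFinset_le hX _)
      hpair (φ := φ - fun _ => μ.real D - ε)
      (hφsm.sub (@stronglyMeasurable_const _ _ (sigmaFinset X {l}) _ _))
      (hφint.sub (integrable_const _)) (by
        filter_upwards [ih] with ω hω
        have := (abs_le.1 hω).1
        simp only [Pi.zero_apply, Pi.sub_apply]
        linarith)
    have hup := le_condExp_of_measure_inter (μ := μ) (sigmaFinset_le hX _) (sigmaFinset_le hX _)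
      hpair (φ := (fun _ => μ.real D + ε) - φ)
      (StronglyMeasurable.sub (@stronglyMeasurable_const _ _ (sigmaFinset X {l}) _ _) hφsm)
      ((integrable_const _).sub hφint) (by
        filter_upwards [ih] with ω hω
        have := (abs_le.1 hω).2
        simp only [Pi.zero_apply, Pi.sub_apply]
        linarith)
    have s₁ := condExp_sub hφint (integrable_const (μ.real D - ε)) (sigmaFinset X {l + 1})
    have s₂ := condExp_sub (integrable_const (μ.real D + ε)) hφint (sigmaFinset X {l + 1})
    have i₁ : ∫ ω, (φ - fun _ => μ.real D - ε : Ω → ℝ) ω ∂μ = ε := by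
      simp only [Pi.sub_apply]
      rw [integral_sub hφint (integrable_const _), hφmean]
      simp
    have i₂ : ∫ ω, ((fun _ => μ.real D + ε) - φ : Ω → ℝ) ω ∂μ = ε := by
      simp only [Pi.sub_apply]
      rw [integral_sub (integrable_const _) hφint, hφmean]
      simp
    rw [i₁] at hlow
    rw [i₂] at hup
    filter_upwards [hlow, hup, s₁, s₂, htower] with ω h₁ h₂ h₃ h₄ h₅
    rw [h₃, Pi.sub_apply, condExp_const (sigmaFinset_le hX _)] at h₁
    rw [h₄, Pi.sub_apply, condExp_const (sigmaFinset_le hX _)] at h₂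
    have e : C * (1 - C⁻¹) ^ (r + 1) * μ.real D = ε - C⁻¹ * ε := by rw [hε]; ring
    rw [← add_assoc, ← hl, e, h₅, abs_le]
    constructor <;> linarith

theorem abs_measureReal_inter_sub_le_of_bot [IsProbabilityMeasure μ] {D A : Set Ω}
    (hD : MeasurableSet[⊥] D) {c : ℝ} (hc : 0 ≤ c) :
    |μ.real (D ∩ A) - μ.real D * μ.real A| ≤ c * μ.real D * μ.real A := by
  have h : μ.real (D ∩ A) - μ.real D * μ.real A = 0 := by
    rcases MeasurableSpace.measurableSet_bot_iff.1 hD with rfl | rfl <;> simp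
  rw [h, abs_zero]
  positivity

/-- `ψ`-mixing of the chain with an exponential rate. -/
theorem UEChain.mixing (hchain : UEChain μ X κ C) (hC : 1 < C) {d : ℕ} {B₁ B₂ : Finset ℕ}
    (hsep : ∀ x ∈ B₁, ∀ y ∈ B₂, x + (d + 1) ≤ y) {D A : Set Ω}
    (hD : MeasurableSet[sigmaFinset X B₁] D) (hA : MeasurableSet[sigmaFinset X B₂] A) :
    |μ.real (D ∩ A) - μ.real D * μ.real A| ≤ C * (1 - C⁻¹) ^ d * μ.real D * μ.real A := by
  have hμ := hchain.1
  have hX := hchain.2.1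
  have hC0 : 0 < C := by linarith
  have hδ0 : 0 ≤ 1 - C⁻¹ := sub_nonneg.2 (inv_le_one_of_one_le₀ hC.le)
  have hδ1 : 1 - C⁻¹ ≤ 1 := by linarith [inv_pos.2 hC0]
  rcases B₁.eq_empty_or_nonempty with rfl | hB₁
  · rw [sigmaFinset_empty] at hD
    exact abs_measureReal_inter_sub_le_of_bot hD (by positivity)
  rcases B₂.eq_empty_or_nonempty with rfl | hB₂
  · rw [sigmaFinset_empty] at hA
    have := abs_measureReal_inter_sub_le_of_bot (μ := μ) (A := D) hA
      (c := C * (1 - C⁻¹) ^ d) (by positivity)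
    rw [Set.inter_comm]
    convert this using 1
    · ring_nf
    · ring
  obtain ⟨k, hk⟩ : ∃ k, k = B₁.max' hB₁ := ⟨_, rfl⟩
  obtain ⟨l, hl⟩ : ∃ l, l = B₂.min' hB₂ := ⟨_, rfl⟩
  have hkl : k + (d + 1) ≤ l := by
    rw [hk, hl]
    exact hsep _ (B₁.max'_mem hB₁) _ (B₂.min'_mem hB₂)
  obtain ⟨r, hr⟩ : ∃ r, l = k + 1 + r := ⟨l - (k + 1), by omega⟩
  have hD' : MeasurableSet[sigmaFinset X (Finset.range (k + 1))] D :=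
    sigmaFinset_mono X (fun x hx => Finset.mem_range.2 (by
      have := B₁.le_max' x hx
      omega)) _ hD
  have hDm := sigmaFinset_le hX _ _ hD
  have hDl : MeasurableSet[sigmaFinset X (Finset.range (l + 1))] D :=
    sigmaFinset_mono X (Finset.range_mono (by omega)) _ hD'
  have hA' : MeasurableSet[sigmaFinset X (Finset.Icc l (l + B₂.max' hB₂))] A :=
    sigmaFinset_mono X (fun x hx => Finset.mem_Icc.2 (by
      have h₁ := B₂.min'_le x hx
      have h₂ := B₂.le_max' x hx
      omega)) _ hA
  have hAm := sigmaFinset_le hX _ _ hA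
  have hint1 : Integrable (D.indicator fun _ => (1 : ℝ)) μ :=
    (integrable_const (1 : ℝ)).indicator hDm
  have hfut := hchain.condExp_future hDl (B₂.max' hB₂)
  have hdec := hchain.abs_condExp_sub_le hC hD' r
  rw [← hr] at hdec
  have e : μ.real (D ∩ A) - μ.real D * μ.real A
      = ∫ ω in A, ((μ[D.indicator (fun _ => (1 : ℝ)) | sigmaFinset X {l}]) ω - μ.real D) ∂μ := by
    rw [integral_sub integrable_condExp.integrableOn (integrable_const _).integrableOn,
      setIntegral_congr_ae (g := μ[D.indicator (fun _ => (1 : ℝ)) |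
        sigmaFinset X (Finset.Icc l (l + B₂.max' hB₂))]) hAm (hfut.mono fun ω h _ => h.symm),
      setIntegral_condExp (sigmaFinset_le hX _) hint1 hA', setIntegral_const, smul_eq_mul,
      setIntegral_indicator hDm, setIntegral_const, smul_eq_mul, mul_one, Set.inter_comm, mul_comm]
  rw [e]
  have hb := norm_setIntegral_le_of_norm_le_const_ae' (measure_lt_top μ A)
    (f := fun ω => (μ[D.indicator (fun _ => (1 : ℝ)) | sigmaFinset X {l}]) ω - μ.real D)
    (C := C * (1 - C⁻¹) ^ r * μ.real D)
    (hdec.mono fun ω h (_ : ω ∈ A) => h)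
  refine hb.trans ?_
  have hpow : (1 - C⁻¹) ^ r ≤ (1 - C⁻¹) ^ d := pow_le_pow_of_le_one hδ0 hδ1 (by omega)
  gcongr

/-- Mixing between a window and what happens at distance `> d` on both sides of it. -/
theorem UEChain.mixing_two_sided (hchain : UEChain μ X κ C) (hC : 1 < C) {d s t : ℕ} (hst : s ≤ t)
    {B : Finset ℕ} (hB : ∀ x ∈ B, x + (d + 1) ≤ s ∨ t + (d + 1) ≤ x)
    (hψ : C * (1 - C⁻¹) ^ d ≤ 1 / 2) {A D : Set Ω}
    (hA : MeasurableSet[sigmaFinset X (Finset.Icc s t)] A) (hD : MeasurableSet[sigmaFinset X B] D) :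
    |μ.real (A ∩ D) - μ.real A * μ.real D|
      ≤ 8 * (C * (1 - C⁻¹) ^ d) * μ.real A * μ.real D := by
  have hμ := hchain.1
  have hX := hchain.2.1
  have hC0 : 0 < C := by linarith
  have hδ0 : 0 ≤ 1 - C⁻¹ := sub_nonneg.2 (inv_le_one_of_one_le₀ hC.le)
  set ψ := C * (1 - C⁻¹) ^ d with hψd
  have hψ0 : 0 ≤ ψ := by positivity
  set B₁ := B.filter fun x => x + (d + 1) ≤ s with hB₁
  set B₃ := B.filter fun x => t + (d + 1) ≤ x with hB₃
  have hunion : B = B₁ ∪ B₃ := by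
    ext x
    simp only [hB₁, hB₃, Finset.mem_union, Finset.mem_filter]
    constructor
    · intro hx
      rcases hB x hx with h | h
      · exact Or.inl ⟨hx, h⟩
      · exact Or.inr ⟨hx, h⟩
    · rintro (h | h) <;> exact h.1
  have hAm := sigmaFinset_le hX _ _ hA
  have hDm := sigmaFinset_le hX _ _ hD
  rw [hunion, sigmaFinset_union] at hD
  have hrect : ∀ F H, MeasurableSet[sigmaFinset X B₁] F → MeasurableSet[sigmaFinset X B₃] H →
      |μ.real (A ∩ (F ∩ H)) - μ.real A * μ.real (F ∩ H)| ≤ 8 * ψ * μ.real A * μ.real (F ∩ H) := by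
    intro F H hF hH
    have h₁ := hchain.mixing hC (d := d) (B₁ := B₁) (B₂ := Finset.Icc s t) (fun x hx y hy => by
      simp only [hB₁, Finset.mem_filter, Finset.mem_Icc] at hx hy; omega) hF hA
    have h₂ := hchain.mixing hC (d := d) (B₁ := B₁) (B₂ := B₃) (fun x hx y hy => by
      simp only [hB₁, hB₃, Finset.mem_filter] at hx hy; omega) hF hH
    have h₃ := hchain.mixing hC (d := d) (B₁ := B₁ ∪ Finset.Icc s t) (B₂ := B₃) (fun x hx y hy => by
      simp only [hB₁, hB₃, Finset.mem_filter, Finset.mem_union, Finset.mem_Icc] at hx hy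
      omega) (D := F ∩ A) (@MeasurableSet.inter _ (sigmaFinset X (B₁ ∪ Finset.Icc s t)) _ _
        (sigmaFinset_mono X Finset.subset_union_left _ hF)
        (sigmaFinset_mono X Finset.subset_union_right _ hA)) hH
    rw [← hψd] at h₁ h₂ h₃
    have eset : A ∩ (F ∩ H) = F ∩ A ∩ H := by
      rw [← Set.inter_assoc, Set.inter_comm A F]
    rw [eset]
    have a0 : 0 ≤ μ.real A := measureReal_nonneg
    have f0 : 0 ≤ μ.real F := measureReal_nonneg
    have g0 : 0 ≤ μ.real H := measureReal_nonneg
    generalize μ.real A = a at *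
    generalize μ.real F = f at *
    generalize μ.real H = g at *
    generalize μ.real (F ∩ A) = fa at *
    generalize μ.real (F ∩ H) = fg at *
    generalize μ.real (F ∩ A ∩ H) = fag at *
    rw [abs_le] at h₁ h₂ h₃ ⊢
    have u1 : fa * g ≤ (1 + ψ) * (f * a) * g := by
      refine mul_le_mul_of_nonneg_right ?_ g0
      linarith [h₁.2]
    have l1 : (1 - ψ) * (f * a) * g ≤ fa * g := by
      refine mul_le_mul_of_nonneg_right ?_ g0
      linarith [h₁.1]
    have u2 : a * fg ≤ a * ((1 + ψ) * (f * g)) := by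
      refine mul_le_mul_of_nonneg_left ?_ a0
      linarith [h₂.2]
    have l2 : a * ((1 - ψ) * (f * g)) ≤ a * fg := by
      refine mul_le_mul_of_nonneg_left ?_ a0
      linarith [h₂.1]
    have q0 : 0 ≤ a * f * g := by positivity
    set q := a * f * g with hq
    have u1' : fa * g ≤ (1 + ψ) * q := by rw [hq]; linarith
    have l1' : (1 - ψ) * q ≤ fa * g := by rw [hq]; linarith
    have u2' : a * fg ≤ (1 + ψ) * q := by rw [hq]; linarith
    have l2' : (1 - ψ) * q ≤ a * fg := by rw [hq]; linarith
    have half : q / 2 ≤ a * fg := by nlinarith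
    have u3 : fag ≤ (1 + ψ) * ((1 + ψ) * q) := by nlinarith [h₃.2]
    have l3 : (1 - ψ) * ((1 - ψ) * q) ≤ fag := by nlinarith [h₃.1]
    have hψq : 0 ≤ ψ * q := mul_nonneg hψ0 q0
    have hψq2 : ψ * (ψ * q) ≤ 1 / 2 * (ψ * q) := mul_le_mul_of_nonneg_right hψ hψq
    have hψq3 : 0 ≤ ψ * (ψ * q) := mul_nonneg hψ0 hψq
    have big : 4 * (ψ * q) ≤ 8 * ψ * a * fg := by nlinarith
    constructor <;> nlinarith
  have hone : Integrable (A.indicator fun _ => (1 : ℝ)) μ :=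
    (integrable_const (1 : ℝ)).indicator hAm
  have hval : ∀ (c : ℝ) (S : Set Ω), MeasurableSet S →
      ∫ ω in S, (A.indicator (fun _ => (1 : ℝ)) ω - c) ∂μ = μ.real (A ∩ S) - c * μ.real S := by
    intro c S hS
    rw [integral_sub hone.integrableOn (integrable_const _).integrableOn, setIntegral_indicator hAm,
      setIntegral_const, setIntegral_const, smul_eq_mul, smul_eq_mul, mul_one, Set.inter_comm,
      mul_comm c]
  have hbd : ∀ (c : ℝ), ∀ᵐ ω ∂μ, |A.indicator (fun _ => (1 : ℝ)) ω - c| ≤ 1 + |c| := fun c =>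
    Eventually.of_forall fun ω => (abs_sub _ _).trans (by
      gcongr
      by_cases hω : ω ∈ A <;> simp [hω])
  rw [abs_le]
  constructor
  · have := setIntegral_nonneg_of_inter (sigmaFinset_le hX B₁) (sigmaFinset_le hX B₃)
      (hone.sub (integrable_const ((1 - 8 * ψ) * μ.real A))) (hbd ((1 - 8 * ψ) * μ.real A))
      (fun F H hF hH => by
        simp only [Pi.sub_apply]
        rw [hval _ _ ((sigmaFinset_le hX _ _ hF).inter (sigmaFinset_le hX _ _ hH))]
        linarith [(abs_le.1 (hrect F H hF hH)).1]) hD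
    simp only [Pi.sub_apply] at this
    rw [hval _ _ hDm] at this
    linarith
  · have := setIntegral_nonneg_of_inter (sigmaFinset_le hX B₁) (sigmaFinset_le hX B₃)
      (hone.sub (integrable_const ((1 + 8 * ψ) * μ.real A))).neg (L := 1 + |(1 + 8 * ψ) * μ.real A|)
      ((hbd ((1 + 8 * ψ) * μ.real A)).mono fun ω h => by
        simpa only [Pi.neg_apply, abs_neg, Pi.sub_apply] using h)
      (fun F H hF hH => by
        simp only [Pi.neg_apply, Pi.sub_apply]
        rw [integral_neg,
          hval _ _ ((sigmaFinset_le hX _ _ hF).inter (sigmaFinset_le hX _ _ hH))]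
        linarith [(abs_le.1 (hrect F H hF hH)).2]) hD
    simp only [Pi.neg_apply, Pi.sub_apply] at this
    rw [integral_neg, hval _ _ hDm] at this
    linarith

/-- A bounded function of a window is almost uncorrelated with what happens far from it. -/
theorem UEChain.abs_condExp_window_sub_le (hchain : UEChain μ X κ C) (hC : 1 < C) {d s t : ℕ}
    (hst : s ≤ t) {B : Finset ℕ} (hB : ∀ x ∈ B, x + d ≤ s ∨ t + d ≤ x) {h : Ω → ℝ}
    (hh : StronglyMeasurable[sigmaFinset X (Finset.Icc s t)] h) {L : ℝ} (hL : ∀ ω, |h ω| ≤ L) :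
    ∀ᵐ ω ∂μ, |(μ[h | sigmaFinset X B]) ω - ∫ ω', h ω' ∂μ|
      ≤ (2 + 16 * C / (1 - C⁻¹)) * L * (1 - C⁻¹) ^ d := by
  have hμ := hchain.1
  have hX := hchain.2.1
  have hC0 : 0 < C := by linarith
  have hδ0 : 0 < 1 - C⁻¹ := sub_pos.2 (inv_lt_one_of_one_lt₀ hC)
  have hm := sigmaFinset_le hX (Finset.Icc s t)
  have hint : Integrable h μ := Integrable.of_bound (hh.mono hm).aestronglyMeasurable L
    (Eventually.of_forall hL)
  obtain ⟨ω₀⟩ : Nonempty Ω := nonempty_of_isProbabilityMeasure μ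
  have hL0 : 0 ≤ L := (abs_nonneg _).trans (hL ω₀)
  have hmean : |∫ ω', h ω' ∂μ| ≤ L := by
    have := norm_integral_le_of_norm_le_const (μ := μ) (f := h) (C := L) (Eventually.of_forall hL)
    simpa using this
  have htriv : ∀ᵐ ω ∂μ, |(μ[h | sigmaFinset X B]) ω - ∫ ω', h ω' ∂μ| ≤ 2 * L := by
    filter_upwards [ae_bdd_abs_condExp_of_ae_bdd_abs (m := sigmaFinset X B) (μ := μ)
      (Eventually.of_forall hL)] with ω hω
    exact (abs_sub _ _).trans (by linarith)
  rcases Nat.eq_zero_or_pos d with rfl | hd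
  · filter_upwards [htriv] with ω hω
    have : 0 ≤ 16 * C / (1 - C⁻¹) * L := by positivity
    rw [pow_zero]
    linarith
  obtain ⟨e, rfl⟩ : ∃ e, d = e + 1 := ⟨d - 1, by omega⟩
  have hpow : (2 + 16 * C / (1 - C⁻¹)) * L * (1 - C⁻¹) ^ (e + 1)
      = 2 * L * (1 - C⁻¹) ^ (e + 1) + 16 * (C * (1 - C⁻¹) ^ e) * L := by
    have : ∀ δ : ℝ, δ ≠ 0 → (2 + 16 * C / δ) * L * δ ^ (e + 1)
        = 2 * L * δ ^ (e + 1) + 16 * (C * δ ^ e) * L := by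
      intro δ hδ
      rw [pow_succ]
      field_simp
    exact this _ hδ0.ne'
  have hrest : 0 ≤ 2 * L * (1 - C⁻¹) ^ (e + 1) := by positivity
  rw [hpow]
  rcases le_or_gt (C * (1 - C⁻¹) ^ e) (1 / 2) with hψ | hψ
  swap
  · filter_upwards [htriv] with ω hω
    nlinarith
  set ψ := C * (1 - C⁻¹) ^ e with hψd
  have hψ0 : 0 ≤ ψ := by positivity
  have hmix := fun A₁ A₂ (h₁ : MeasurableSet[sigmaFinset X (Finset.Icc s t)] A₁)
    (h₂ : MeasurableSet[sigmaFinset X B] A₂) =>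
      abs_le.1 (hchain.mixing_two_sided hC hst hB hψ h₁ h₂)
  have hsm : StronglyMeasurable[sigmaFinset X (Finset.Icc s t)] (h + fun _ => L) :=
    hh.add (@stronglyMeasurable_const _ _ (sigmaFinset X (Finset.Icc s t)) _ _)
  have hintL : Integrable (h + fun _ => L) μ := hint.add (integrable_const L)
  have h0 : 0 ≤ᵐ[μ] (h + fun _ => L) := Eventually.of_forall fun ω => by
    have := (abs_le.1 (hL ω)).1
    simp only [Pi.zero_apply, Pi.add_apply]
    linarith
  have hlow := le_condExp_of_measure_inter (μ := μ) hm (sigmaFinset_le hX B) (a := 1 - 8 * ψ)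
    (fun A₁ A₂ h₁ h₂ => by linarith [(hmix A₁ A₂ h₁ h₂).1]) hsm hintL h0
  have hup := condExp_le_of_measure_inter (μ := μ) hm (sigmaFinset_le hX B) (b := 1 + 8 * ψ)
    (by positivity) (fun A₁ A₂ h₁ h₂ => by linarith [(hmix A₁ A₂ h₁ h₂).2]) hsm hintL h0
  have hI : ∫ ω, (h + fun _ => L : Ω → ℝ) ω ∂μ = ∫ ω, h ω ∂μ + L := by
    simp only [Pi.add_apply]
    rw [integral_add hint (integrable_const L)]
    simp
  rw [hI] at hlow hup
  filter_upwards [hlow, hup, condExp_add hint (integrable_const L) (sigmaFinset X B)]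
    with ω h₁ h₂ h₃
  rw [h₃, Pi.add_apply, condExp_const (sigmaFinset_le hX B)] at h₁ h₂
  have hle : ψ * (∫ ω, h ω ∂μ + L) ≤ ψ * (2 * L) :=
    mul_le_mul_of_nonneg_left (by linarith [le_abs_self (∫ ω, h ω ∂μ)]) hψ0
  rw [abs_le]
  constructor <;> linarith

/-- The conditional covariance `Cov(U, V | m) = 𝔼(U V | m) - 𝔼(U | m) 𝔼(V | m)`. -/
def condCov (μ : Measure Ω) (m : MeasurableSpace Ω) (U V : Ω → ℝ) : Ω → ℝ :=
  fun ω => (μ[U * V | m]) ω - (μ[U | m]) ω * (μ[V | m]) ω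

theorem condCov_comm {α : Type*} (m : MeasurableSpace α) {m₀ : MeasurableSpace α} (μ : Measure α)
    (U V : α → ℝ) :
    condCov μ m U V = condCov μ m V U := by
  funext ω
  rw [condCov, condCov, mul_comm U V, mul_comm ((μ[U | m]) ω)]

theorem condCov_bot [IsProbabilityMeasure μ] (U V : Ω → ℝ) (ω : Ω) :
    condCov μ ⊥ U V ω = ∫ ω, (U * V) ω ∂μ - (∫ ω, U ω ∂μ) * ∫ ω, V ω ∂μ := by
  simp only [condCov, condExp_bot]

/-- The conditional variance of a sum is the sum of the conditional covariances. -/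
theorem condVar_sum_eq_sum_condCov {α : Type*} (m : MeasurableSpace α) {m₀ : MeasurableSpace α}
    {μ : Measure α} {Y : ℕ → α → ℝ} (hY : ∀ n, Integrable (Y n) μ)
    (hYY : ∀ i j, Integrable (Y i * Y j) μ) (s : Finset ℕ) :
    condVar μ m (fun ω => ∑ n ∈ s, Y n ω)
      =ᵐ[μ] fun ω => ∑ i ∈ s, ∑ j ∈ s, condCov μ m (Y i) (Y j) ω := by
  have e₁ : (fun ω => (∑ n ∈ s, Y n ω) ^ 2) = ∑ p ∈ s ×ˢ s, Y p.1 * Y p.2 := by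
    funext ω
    simp only [sq, Finset.sum_mul_sum, Finset.sum_apply, Pi.mul_apply, Finset.sum_product]
  have e₂ : (fun ω => ∑ n ∈ s, Y n ω) = ∑ n ∈ s, Y n := by
    funext ω
    simp
  filter_upwards [condExp_finsetSum (s := s ×ˢ s) (f := fun p => Y p.1 * Y p.2)
    (fun p _ => hYY p.1 p.2) m, condExp_finsetSum (s := s) (f := Y) (fun n _ => hY n) m]
    with ω h₁ h₂
  rw [condVar, e₁, e₂, h₁, h₂]
  simp only [Finset.sum_apply, condCov, Finset.sum_product, Finset.sum_sub_distrib, sq,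
    Finset.sum_mul_sum]

/-- The constant in the exponential decay of correlations of a uniformly elliptic chain. -/
def mixingConst (C : ℝ) : ℝ := 2 + 16 * C / (1 - C⁻¹)

theorem mixingConst_nonneg (hC : 1 < C) : 0 ≤ mixingConst C := by
  have : 0 < 1 - C⁻¹ := sub_pos.2 (inv_lt_one_of_one_lt₀ hC)
  rw [mixingConst]
  positivity

section Observable

variable {Y : ℕ → Ω → ℝ} {L : ℝ}

theorem integrable_of_sigmaFinset [IsProbabilityMeasure μ] (hX : ∀ n, Measurable (X n))
    (hY : ∀ n, StronglyMeasurable[sigmaFinset X {n}] (Y n)) (hL : ∀ n ω, |Y n ω| ≤ L) (n : ℕ) :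
    Integrable (Y n) μ :=
  Integrable.of_bound ((hY n).mono (sigmaFinset_le hX _)).aestronglyMeasurable L
    (Eventually.of_forall (hL n))

theorem abs_mul_le_sq (hL : ∀ n ω, |Y n ω| ≤ L) (i j : ℕ) (ω : Ω) : |(Y i * Y j) ω| ≤ L ^ 2 := by
  rw [Pi.mul_apply, abs_mul, sq]
  exact mul_le_mul (hL i ω) (hL j ω) (abs_nonneg _) ((abs_nonneg _).trans (hL i ω))

theorem integrable_mul_of_sigmaFinset [IsProbabilityMeasure μ] (hX : ∀ n, Measurable (X n))
    (hY : ∀ n, StronglyMeasurable[sigmaFinset X {n}] (Y n)) (hL : ∀ n ω, |Y n ω| ≤ L) (i j : ℕ) :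
    Integrable (Y i * Y j) μ :=
  Integrable.of_bound (((hY i).mono (sigmaFinset_le hX _)).mul
    ((hY j).mono (sigmaFinset_le hX _))).aestronglyMeasurable (L ^ 2)
    (Eventually.of_forall (abs_mul_le_sq hL i j))

theorem abs_integral_le_of_abs_le [IsProbabilityMeasure μ] {h : Ω → ℝ} (hL : ∀ ω, |h ω| ≤ L) :
    |∫ ω, h ω ∂μ| ≤ L := by
  have := norm_integral_le_of_norm_le_const (μ := μ) (f := h) (C := L) (Eventually.of_forall hL)
  simpa using this

/-- The conditional mean of an observable is close to its mean far from the conditioning. -/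
theorem UEChain.abs_condExp_sub_integral_le (hchain : UEChain μ X κ C) (hC : 1 < C)
    (hY : ∀ n, StronglyMeasurable[sigmaFinset X {n}] (Y n)) (hL : ∀ n ω, |Y n ω| ≤ L)
    {B : Finset ℕ} {i d : ℕ} (hB : ∀ x ∈ B, x + d ≤ i ∨ i + d ≤ x) :
    ∀ᵐ ω ∂μ, |(μ[Y i | sigmaFinset X B]) ω - ∫ ω', Y i ω' ∂μ|
      ≤ mixingConst C * L * (1 - C⁻¹) ^ d :=
  hchain.abs_condExp_window_sub_le hC le_rfl hB (by rw [Finset.Icc_self]; exact hY i) (hL i)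

/-- Conditional covariances decay with the distance from one observable to the other one and
to the conditioning. -/
theorem UEChain.abs_condCov_le (hchain : UEChain μ X κ C) (hC : 1 < C)
    (hY : ∀ n, StronglyMeasurable[sigmaFinset X {n}] (Y n)) (hL : ∀ n ω, |Y n ω| ≤ L)
    {B : Finset ℕ} {i j d : ℕ} (hB : ∀ x ∈ B, x + d ≤ j ∨ j + d ≤ x)
    (hij : i + d ≤ j ∨ j + d ≤ i) :
    ∀ᵐ ω ∂μ, |condCov μ (sigmaFinset X B) (Y i) (Y j) ω|
      ≤ 2 * mixingConst C * L ^ 2 * (1 - C⁻¹) ^ d := by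
  have hμ := hchain.1
  have hX := hchain.2.1
  have hint := integrable_of_sigmaFinset (μ := μ) hX hY hL
  have hint₂ := integrable_mul_of_sigmaFinset (μ := μ) hX hY hL
  obtain ⟨ω₀⟩ : Nonempty Ω := nonempty_of_isProbabilityMeasure μ
  have hL0 : 0 ≤ L := (abs_nonneg _).trans (hL 0 ω₀)
  set e := ∫ ω, Y j ω ∂μ with he
  set η := mixingConst C * L * (1 - C⁻¹) ^ d with hη
  have hle : sigmaFinset X B ≤ sigmaFinset X (insert i B) :=
    sigmaFinset_mono X (Finset.subset_insert _ _)
  have hYi : StronglyMeasurable[sigmaFinset X (insert i B)] (Y i) :=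
    (hY i).mono (sigmaFinset_mono X (by simp))
  have hfar := hchain.abs_condExp_sub_integral_le hC hY hL (B := insert i B) (i := j) (d := d)
    (fun x hx => by
      rcases Finset.mem_insert.1 hx with rfl | hx
      · exact hij
      · exact hB x hx)
  have hpull := condExp_stronglyMeasurable_mul_of_bound (sigmaFinset_le hX _) hYi (hint j) L
    (Eventually.of_forall (hL i))
  have hinner : ∀ᵐ ω ∂μ, |(μ[Y i * Y j - e • Y i | sigmaFinset X (insert i B)]) ω| ≤ L * η := by
    filter_upwards [condExp_sub (hint₂ i j) ((hint i).smul e) (sigmaFinset X (insert i B)),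
      hpull, condExp_smul e (Y i) (sigmaFinset X (insert i B)),
      hfar] with ω h₁ h₂ h₃ h₄
    rw [h₁, Pi.sub_apply, h₂, h₃, Pi.mul_apply, Pi.smul_apply, smul_eq_mul,
      condExp_of_stronglyMeasurable (sigmaFinset_le hX _) hYi (hint i)]
    have : Y i ω * (μ[Y j | sigmaFinset X (insert i B)]) ω - e * Y i ω
        = Y i ω * ((μ[Y j | sigmaFinset X (insert i B)]) ω - e) := by ring
    rw [this, abs_mul]
    exact mul_le_mul (hL i ω) h₄ (abs_nonneg _) hL0
  have houter := ae_bdd_abs_condExp_of_ae_bdd_abs (m := sigmaFinset X B) hinner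
  filter_upwards [houter, condExp_condExp_of_le (f := Y i * Y j - e • Y i) (μ := μ) hle
    (sigmaFinset_le hX _), condExp_sub (hint₂ i j) ((hint i).smul e) (sigmaFinset X B),
    condExp_smul e (Y i) (sigmaFinset X B),
    hchain.abs_condExp_sub_integral_le hC hY hL hB,
    ae_bdd_abs_condExp_of_ae_bdd_abs (m := sigmaFinset X B) (μ := μ)
      (Eventually.of_forall (hL i))] with ω h₁ h₂ h₃ h₄ h₅ h₆
  rw [h₂, h₃, Pi.sub_apply, h₄, Pi.smul_apply, smul_eq_mul] at h₁
  have h₇ : |(μ[Y i | sigmaFinset X B]) ω * ((μ[Y j | sigmaFinset X B]) ω - e)| ≤ L * η := by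
    rw [abs_mul]
    exact mul_le_mul h₆ h₅ (abs_nonneg _) hL0
  have hsplit : condCov μ (sigmaFinset X B) (Y i) (Y j) ω
      = ((μ[Y i * Y j | sigmaFinset X B]) ω - e * (μ[Y i | sigmaFinset X B]) ω)
        - (μ[Y i | sigmaFinset X B]) ω * ((μ[Y j | sigmaFinset X B]) ω - e) := by
    rw [condCov]
    ring
  rw [hsplit]
  refine (abs_sub _ _).trans ((add_le_add h₁ h₇).trans (le_of_eq ?_))
  rw [hη]
  ring

/-- Exponential decay of the (unconditional) covariances. -/
theorem UEChain.abs_condCov_bot_le (hchain : UEChain μ X κ C) (hC : 1 < C)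
    (hY : ∀ n, StronglyMeasurable[sigmaFinset X {n}] (Y n)) (hL : ∀ n ω, |Y n ω| ≤ L)
    {i j d : ℕ} (hij : i + d ≤ j ∨ j + d ≤ i) (ω : Ω) :
    |condCov μ ⊥ (Y i) (Y j) ω| ≤ 2 * mixingConst C * L ^ 2 * (1 - C⁻¹) ^ d := by
  have hμ := hchain.1
  have h := hchain.abs_condCov_le hC hY hL (B := ∅) (by simp) hij
  rw [sigmaFinset_empty] at h
  obtain ⟨ω₁, hbound⟩ := h.exists
  rw [condCov_bot] at hbound ⊢
  exact hbound

/-- The conditional covariance of two observables is close to the unconditional one if the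
conditioning is far from the window they span. -/
theorem UEChain.abs_condCov_sub_le_of_window (hchain : UEChain μ X κ C) (hC : 1 < C)
    (hY : ∀ n, StronglyMeasurable[sigmaFinset X {n}] (Y n)) (hL : ∀ n ω, |Y n ω| ≤ L)
    {B : Finset ℕ} {i j d : ℕ} (hij : i ≤ j) (hB : ∀ x ∈ B, x + d ≤ i ∨ j + d ≤ x) :
    ∀ᵐ ω ∂μ, |condCov μ (sigmaFinset X B) (Y i) (Y j) ω - condCov μ ⊥ (Y i) (Y j) ω|
      ≤ 3 * mixingConst C * L ^ 2 * (1 - C⁻¹) ^ d := by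
  have hμ := hchain.1
  have hX := hchain.2.1
  obtain ⟨ω₀⟩ : Nonempty Ω := nonempty_of_isProbabilityMeasure μ
  have hL0 : 0 ≤ L := (abs_nonneg _).trans (hL 0 ω₀)
  have hprod := hchain.abs_condExp_window_sub_le hC hij hB (h := Y i * Y j)
    (((hY i).mono (sigmaFinset_mono X (by simpa using hij))).mul
      ((hY j).mono (sigmaFinset_mono X (by simpa using hij)))) (abs_mul_le_sq hL i j)
  filter_upwards [hprod,
    hchain.abs_condExp_sub_integral_le hC hY hL (i := i) (d := d)
      (fun x hx => by have := hB x hx; omega),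
    hchain.abs_condExp_sub_integral_le hC hY hL (i := j) (d := d)
      (fun x hx => by have := hB x hx; omega),
    ae_bdd_abs_condExp_of_ae_bdd_abs (m := sigmaFinset X B) (μ := μ)
      (Eventually.of_forall (hL i))] with ω h₁ h₂ h₃ h₄
  have hej : |∫ ω, Y j ω ∂μ| ≤ L := abs_integral_le_of_abs_le (hL j)
  rw [condCov_bot, condCov]
  change _ ≤ mixingConst C * L ^ 2 * _ at h₁
  set p := (μ[Y i * Y j | sigmaFinset X B]) ω
  set u := (μ[Y i | sigmaFinset X B]) ω
  set v := (μ[Y j | sigmaFinset X B]) ω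
  have b₁ : |u * (v - ∫ ω, Y j ω ∂μ)| ≤ L * (mixingConst C * L * (1 - C⁻¹) ^ d) := by
    rw [abs_mul]
    exact mul_le_mul h₄ h₃ (abs_nonneg _) hL0
  have b₂ : |(∫ ω, Y j ω ∂μ) * (u - ∫ ω, Y i ω ∂μ)|
      ≤ L * (mixingConst C * L * (1 - C⁻¹) ^ d) := by
    rw [abs_mul]
    exact mul_le_mul hej h₂ (abs_nonneg _) hL0
  rw [abs_le] at h₁ b₁ b₂ ⊢
  constructor <;> nlinarith

/-- Comparison of conditional and unconditional covariances in terms of the distances of the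
two observables to the conditioning and to each other. -/
theorem UEChain.abs_condCov_sub_le (hchain : UEChain μ X κ C) (hC : 1 < C)
    (hY : ∀ n, StronglyMeasurable[sigmaFinset X {n}] (Y n)) (hL : ∀ n ω, |Y n ω| ≤ L)
    {B : Finset ℕ} {i j a b g : ℕ} (hij : i ≤ j) (hg : g = ((i : ℤ) - j).natAbs)
    (ha : ∀ x ∈ B, a ≤ ((i : ℤ) - x).natAbs) (hb : ∀ x ∈ B, b ≤ ((j : ℤ) - x).natAbs) :
    ∀ᵐ ω ∂μ, |condCov μ (sigmaFinset X B) (Y i) (Y j) ω - condCov μ ⊥ (Y i) (Y j) ω|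
      ≤ 4 * mixingConst C * L ^ 2 * (√(1 - C⁻¹) ^ (a + b) + √(1 - C⁻¹) ^ (a + g)
        + √(1 - C⁻¹) ^ (b + g)) := by
  have hδ0 : 0 ≤ 1 - C⁻¹ := sub_nonneg.2 (inv_le_one_of_one_le₀ hC.le)
  have hδ1 : 1 - C⁻¹ ≤ 1 := by linarith [inv_pos.2 (zero_lt_one.trans hC)]
  have hc := mixingConst_nonneg hC
  have hM : 0 ≤ mixingConst C * L ^ 2 := by positivity
  set θ := √(1 - C⁻¹) with hθ
  have hθ0 : 0 ≤ θ := Real.sqrt_nonneg _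
  have hθ1 : θ ≤ 1 := Real.sqrt_le_one.2 hδ1
  have hpow : ∀ {e : ℕ}, a + b ≤ 2 * e ∨ a + g ≤ 2 * e ∨ b + g ≤ 2 * e →
      (1 - C⁻¹) ^ e ≤ θ ^ (a + b) + θ ^ (a + g) + θ ^ (b + g) := by
    intro e he
    have p₁ : 0 ≤ θ ^ (a + b) := pow_nonneg hθ0 _
    have p₂ : 0 ≤ θ ^ (a + g) := pow_nonneg hθ0 _
    have p₃ : 0 ≤ θ ^ (b + g) := pow_nonneg hθ0 _
    have e₁ : (1 - C⁻¹) ^ e = θ ^ (2 * e) := by rw [pow_mul, hθ, Real.sq_sqrt hδ0]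
    rw [e₁]
    rcases he with h | h | h
    all_goals
      have := pow_le_pow_of_le_one hθ0 hθ1 h
      linarith
  have near : ∀ e, e ≤ g → e ≤ a ∨ e ≤ b → a + b ≤ 2 * e ∨ a + g ≤ 2 * e ∨ b + g ≤ 2 * e →
      ∀ᵐ ω ∂μ, |condCov μ (sigmaFinset X B) (Y i) (Y j) ω - condCov μ ⊥ (Y i) (Y j) ω|
        ≤ 4 * mixingConst C * L ^ 2 * (θ ^ (a + b) + θ ^ (a + g) + θ ^ (b + g)) := by
    intro e heg hab he
    have hcond : ∀ᵐ ω ∂μ, |condCov μ (sigmaFinset X B) (Y i) (Y j) ω|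
        ≤ 2 * mixingConst C * L ^ 2 * (1 - C⁻¹) ^ e := by
      rcases hab with h | h
      · rw [condCov_comm]
        exact hchain.abs_condCov_le hC hY hL (fun x hx => by have := ha x hx; omega) (by omega)
      · exact hchain.abs_condCov_le hC hY hL (fun x hx => by have := hb x hx; omega) (by omega)
    filter_upwards [hcond] with ω h₁
    have h₂ := hchain.abs_condCov_bot_le hC hY hL (i := i) (j := j) (d := e) (by omega) ω
    refine (abs_sub _ _).trans ((add_le_add h₁ h₂).trans ?_)
    have := mul_le_mul_of_nonneg_left (hpow he) hM
    linarith
  by_cases hbtw : ∃ x ∈ B, i ≤ x ∧ x ≤ j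
  · obtain ⟨x, hx, hix, hxj⟩ := hbtw
    have h₁ := ha x hx
    have h₂ := hb x hx
    exact near (max a b) (by omega) (by omega) (by omega)
  push Not at hbtw
  rcases le_total (max a b) g with h | h
  · exact near (max a b) h (by omega) (by omega)
  rcases le_total (min a b) g with h' | h'
  · exact near g le_rfl (by omega) (by omega)
  filter_upwards [hchain.abs_condCov_sub_le_of_window hC hY hL (d := min a b) hij
    (fun x hx => by
      have h₁ := hbtw x hx
      have h₂ := ha x hx
      have h₃ := hb x hx
      omega)] with ω hω
  refine hω.trans ?_
  have h₁ := mul_le_mul_of_nonneg_left (hpow (e := min a b) (by omega)) hM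
  have h₂ : 0 ≤ mixingConst C * L ^ 2 * (1 - C⁻¹) ^ min a b := mul_nonneg hM (pow_nonneg hδ0 _)
  linarith

end Observable

theorem sum_pow_natAbs_sub_le {θ : ℝ} (h0 : 0 ≤ θ) (h1 : θ < 1) (s : Finset ℕ) (x : ℕ) :
    ∑ i ∈ s, θ ^ ((i : ℤ) - x).natAbs ≤ 2 * (1 - θ)⁻¹ := by
  have half : ∀ t : Finset ℕ, Set.InjOn (fun i : ℕ => ((i : ℤ) - x).natAbs) t →
      ∑ i ∈ t, θ ^ ((i : ℤ) - x).natAbs ≤ (1 - θ)⁻¹ := by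
    intro t ht
    rw [← Finset.sum_image (f := fun n => θ ^ n) ht, ← tsum_geometric_of_lt_one h0 h1]
    exact Summable.sum_le_tsum _ (fun n _ => pow_nonneg h0 n)
      (summable_geometric_of_lt_one h0 h1)
  rw [← Finset.sum_filter_add_sum_filter_not s (fun i => i ≤ x)]
  have h₁ := half (s.filter fun i => i ≤ x) (fun i hi j hj hij => by
    simp only [Finset.coe_filter, Set.mem_ofPred_eq] at hi hj hij
    omega)
  have h₂ := half (s.filter fun i => ¬ i ≤ x) (fun i hi j hj hij => by
    simp only [Finset.coe_filter, Set.mem_ofPred_eq] at hi hj hij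
    omega)
  linarith

section Sums

variable {Y : ℕ → Ω → ℝ} {L : ℝ}

/-- The distance to a nonempty finite set of times is attained, and its powers are summable. -/
theorem exists_dist_sum_pow_le {θ : ℝ} (h0 : 0 ≤ θ) (h1 : θ < 1) {B : Finset ℕ}
    (hB : B.Nonempty) (s : Finset ℕ) :
    ∃ d : ℕ → ℕ, (∀ i, ∀ x ∈ B, d i ≤ ((i : ℤ) - x).natAbs) ∧
      ∑ i ∈ s, θ ^ d i ≤ 2 * (1 - θ)⁻¹ * B.card := by
  choose k hk hmin using fun i : ℕ => B.exists_min_image (fun x : ℕ => ((i : ℤ) - x).natAbs) hB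
  refine ⟨fun i => ((i : ℤ) - k i).natAbs, hmin, ?_⟩
  calc ∑ i ∈ s, θ ^ ((i : ℤ) - k i).natAbs
      ≤ ∑ i ∈ s, ∑ x ∈ B, θ ^ ((i : ℤ) - x).natAbs := Finset.sum_le_sum fun i _ =>
        Finset.single_le_sum (f := fun x : ℕ => θ ^ ((i : ℤ) - x).natAbs)
          (fun x _ => pow_nonneg h0 _) (hk i)
    _ = ∑ x ∈ B, ∑ i ∈ s, θ ^ ((i : ℤ) - x).natAbs := Finset.sum_comm
    _ ≤ ∑ x ∈ B, 2 * (1 - θ)⁻¹ := Finset.sum_le_sum fun x _ => sum_pow_natAbs_sub_le h0 h1 s x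
    _ = 2 * (1 - θ)⁻¹ * B.card := by rw [Finset.sum_const, nsmul_eq_mul, mul_comm]

/-- Conditioning on `|B|` states changes the mean of a sum by `O(|B|)`. -/
theorem UEChain.abs_condExp_sum_sub_le (hchain : UEChain μ X κ C) (hC : 1 < C)
    (hY : ∀ n, StronglyMeasurable[sigmaFinset X {n}] (Y n)) (hL : ∀ n ω, |Y n ω| ≤ L)
    (B s : Finset ℕ) :
    ∀ᵐ ω ∂μ, |(μ[fun ω' => ∑ n ∈ s, Y n ω' | sigmaFinset X B]) ω - ∫ ω', ∑ n ∈ s, Y n ω' ∂μ|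
      ≤ mixingConst C * L * (2 * C) * B.card := by
  have hμ := hchain.1
  have hX := hchain.2.1
  have hint := integrable_of_sigmaFinset (μ := μ) hX hY hL
  rcases B.eq_empty_or_nonempty with rfl | hB
  · refine Eventually.of_forall fun ω => ?_
    rw [sigmaFinset_empty, condExp_bot]
    simp
  have hC0 : 0 < C := zero_lt_one.trans hC
  have hδ0 : 0 ≤ 1 - C⁻¹ := sub_nonneg.2 (inv_le_one_of_one_le₀ hC.le)
  have hδ1 : 1 - C⁻¹ < 1 := by linarith [inv_pos.2 hC0]
  obtain ⟨ω₀⟩ : Nonempty Ω := nonempty_of_isProbabilityMeasure μ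
  have hL0 : 0 ≤ L := (abs_nonneg _).trans (hL 0 ω₀)
  have hc := mixingConst_nonneg hC
  obtain ⟨d, hd, hsum⟩ := exists_dist_sum_pow_le hδ0 hδ1 hB s
  rw [sub_sub_cancel, inv_inv] at hsum
  have hall : ∀ᵐ ω ∂μ, ∀ i, |(μ[Y i | sigmaFinset X B]) ω - ∫ ω', Y i ω' ∂μ|
      ≤ mixingConst C * L * (1 - C⁻¹) ^ d i :=
    ae_all_iff.2 fun i => hchain.abs_condExp_sub_integral_le hC hY hL
      (fun x hx => by have := hd i x hx; omega)
  have e : (fun ω => ∑ n ∈ s, Y n ω) = ∑ n ∈ s, Y n := by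
    funext ω
    simp
  filter_upwards [hall, condExp_finsetSum (s := s) (f := Y) (fun n _ => hint n)
    (sigmaFinset X B)] with ω h₁ h₂
  rw [integral_finsetSum s fun n _ => hint n, e, h₂, Finset.sum_apply, ← Finset.sum_sub_distrib]
  calc |∑ i ∈ s, ((μ[Y i | sigmaFinset X B]) ω - ∫ ω', Y i ω' ∂μ)|
      ≤ ∑ i ∈ s, |(μ[Y i | sigmaFinset X B]) ω - ∫ ω', Y i ω' ∂μ| := Finset.abs_sum_le_sum_abs _ _
    _ ≤ ∑ i ∈ s, mixingConst C * L * (1 - C⁻¹) ^ d i := Finset.sum_le_sum fun i _ => h₁ i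
    _ = mixingConst C * L * ∑ i ∈ s, (1 - C⁻¹) ^ d i := by rw [Finset.mul_sum]
    _ ≤ mixingConst C * L * (2 * C * B.card) := by gcongr
    _ = mixingConst C * L * (2 * C) * B.card := by ring

/-- Conditioning on `|B|` states changes the variance of a sum by `O(|B|²)`. -/
theorem UEChain.abs_condVar_sum_sub_variance_le (hchain : UEChain μ X κ C) (hC : 1 < C)
    (hY : ∀ n, StronglyMeasurable[sigmaFinset X {n}] (Y n)) (hL : ∀ n ω, |Y n ω| ≤ L)
    (B s : Finset ℕ) :
    ∀ᵐ ω ∂μ, |condVar μ (sigmaFinset X B) (fun ω' => ∑ n ∈ s, Y n ω') ω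
        - variance (fun ω' => ∑ n ∈ s, Y n ω') μ|
      ≤ 12 * mixingConst C * L ^ 2 * (2 * (1 - √(1 - C⁻¹))⁻¹) ^ 2 * (B.card : ℝ) ^ 2 := by
  have hμ := hchain.1
  have hX := hchain.2.1
  have hint := integrable_of_sigmaFinset (μ := μ) hX hY hL
  have hint₂ := integrable_mul_of_sigmaFinset (μ := μ) hX hY hL
  have hvar : ∀ ω, condVar μ ⊥ (fun ω' => ∑ n ∈ s, Y n ω') ω
      = variance (fun ω' => ∑ n ∈ s, Y n ω') μ := by
    intro ω
    have hmem : MemLp (fun ω' => ∑ n ∈ s, Y n ω') 2 μ := memLp_finsetSum s fun n _ =>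
      MemLp.of_bound ((hY n).mono (sigmaFinset_le hX _)).aestronglyMeasurable L
        (Eventually.of_forall (hL n))
    rw [variance_eq_sub hmem, condVar, condExp_bot, condExp_bot]
    rfl
  rcases B.eq_empty_or_nonempty with rfl | hB
  · refine Eventually.of_forall fun ω => ?_
    rw [sigmaFinset_empty, hvar]
    simp
  have hC0 : 0 < C := zero_lt_one.trans hC
  have hδ1 : 1 - C⁻¹ < 1 := by linarith [inv_pos.2 hC0]
  have hc := mixingConst_nonneg hC
  set θ := √(1 - C⁻¹) with hθ
  have hθ0 : 0 ≤ θ := Real.sqrt_nonneg _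
  have hθ1 : θ < 1 := (Real.sqrt_lt' one_pos).2 (by simpa using hδ1)
  set Γ := 2 * (1 - θ)⁻¹ with hΓ
  have hΓ0 : 0 ≤ Γ := mul_nonneg zero_le_two (inv_nonneg.2 (sub_nonneg.2 hθ1.le))
  obtain ⟨d, hd, hsum⟩ := exists_dist_sum_pow_le hθ0 hθ1 hB s
  rw [← hΓ] at hsum
  set M := 4 * mixingConst C * L ^ 2 with hM
  have hM0 : 0 ≤ M := by positivity
  have hall : ∀ᵐ ω ∂μ, ∀ i j : ℕ,
      |condCov μ (sigmaFinset X B) (Y i) (Y j) ω - condCov μ ⊥ (Y i) (Y j) ω|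
        ≤ M * (θ ^ d i * θ ^ d j + θ ^ d i * θ ^ ((j : ℤ) - i).natAbs
          + θ ^ d j * θ ^ ((i : ℤ) - j).natAbs) := by
    refine ae_all_iff.2 fun i => ae_all_iff.2 fun j => ?_
    have hcomm : ((j : ℤ) - i).natAbs = ((i : ℤ) - j).natAbs := by omega
    simp only [← pow_add]
    rcases le_total i j with hij | hij
    · rw [hcomm]
      exact hchain.abs_condCov_sub_le hC hY hL hij rfl (hd i) (hd j)
    · filter_upwards [hchain.abs_condCov_sub_le hC hY hL hij rfl (hd j) (hd i)] with ω hω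
      rw [condCov_comm, condCov_comm ⊥]
      refine hω.trans (le_of_eq ?_)
      rw [hcomm, add_comm (d j) (d i)]
      ring
  have hcard : (1 : ℝ) ≤ B.card := by exact_mod_cast hB.card_pos
  have hT0 : 0 ≤ ∑ i ∈ s, θ ^ d i := Finset.sum_nonneg fun i _ => pow_nonneg hθ0 _
  have hone : ∑ i ∈ s, ∑ j ∈ s, θ ^ d i * θ ^ ((j : ℤ) - i).natAbs ≤ Γ ^ 2 * B.card := by
    calc ∑ i ∈ s, ∑ j ∈ s, θ ^ d i * θ ^ ((j : ℤ) - i).natAbs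
        ≤ ∑ i ∈ s, θ ^ d i * Γ := Finset.sum_le_sum fun i _ => by
          rw [← Finset.mul_sum]
          exact mul_le_mul_of_nonneg_left (sum_pow_natAbs_sub_le hθ0 hθ1 s i) (pow_nonneg hθ0 _)
      _ = (∑ i ∈ s, θ ^ d i) * Γ := by rw [Finset.sum_mul]
      _ ≤ Γ * B.card * Γ := by gcongr
      _ = Γ ^ 2 * B.card := by ring
  have hone' : ∑ i ∈ s, ∑ j ∈ s, θ ^ d j * θ ^ ((i : ℤ) - j).natAbs ≤ Γ ^ 2 * B.card := by
    rwa [Finset.sum_comm]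
  have htwo : ∑ i ∈ s, ∑ j ∈ s, θ ^ d i * θ ^ d j ≤ (Γ * B.card) ^ 2 := by
    rw [← Finset.sum_mul_sum, ← sq]
    gcongr
  filter_upwards [hall, condVar_sum_eq_sum_condCov (sigmaFinset X B) hint hint₂ s,
    condVar_sum_eq_sum_condCov ⊥ hint hint₂ s] with ω h₁ h₂ h₃
  rw [← hvar ω, h₂, h₃, ← Finset.sum_sub_distrib]
  simp only [← Finset.sum_sub_distrib]
  calc |∑ i ∈ s, ∑ j ∈ s, (condCov μ (sigmaFinset X B) (Y i) (Y j) ω - condCov μ ⊥ (Y i) (Y j) ω)|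
      ≤ ∑ i ∈ s, ∑ j ∈ s,
          |condCov μ (sigmaFinset X B) (Y i) (Y j) ω - condCov μ ⊥ (Y i) (Y j) ω| :=
        (Finset.abs_sum_le_sum_abs _ _).trans
          (Finset.sum_le_sum fun i _ => Finset.abs_sum_le_sum_abs _ _)
    _ ≤ ∑ i ∈ s, ∑ j ∈ s, M * (θ ^ d i * θ ^ d j + θ ^ d i * θ ^ ((j : ℤ) - i).natAbs
          + θ ^ d j * θ ^ ((i : ℤ) - j).natAbs) :=
        Finset.sum_le_sum fun i _ => Finset.sum_le_sum fun j _ => h₁ i j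
    _ = M * (∑ i ∈ s, ∑ j ∈ s, θ ^ d i * θ ^ d j
          + ∑ i ∈ s, ∑ j ∈ s, θ ^ d i * θ ^ ((j : ℤ) - i).natAbs
          + ∑ i ∈ s, ∑ j ∈ s, θ ^ d j * θ ^ ((i : ℤ) - j).natAbs) := by
        simp only [Finset.mul_sum, mul_add, Finset.sum_add_distrib]
    _ ≤ M * ((Γ * B.card) ^ 2 + Γ ^ 2 * B.card + Γ ^ 2 * B.card) := by gcongr
    _ ≤ M * (3 * Γ ^ 2 * (B.card : ℝ) ^ 2) := by
        refine mul_le_mul_of_nonneg_left ?_ hM0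
        have : Γ ^ 2 * (B.card : ℝ) ≤ Γ ^ 2 * (B.card : ℝ) ^ 2 :=
          mul_le_mul_of_nonneg_left (by nlinarith) (sq_nonneg _)
        nlinarith
    _ = 12 * mixingConst C * L ^ 2 * Γ ^ 2 * (B.card : ℝ) ^ 2 := by
        rw [hM]
        ring

end Sums

theorem qres_nonneg (μ : Measure Ω) (X : ℕ → Ω → E) (f : ℕ → E → ℤ) (n m : ℕ) :
    0 ≤ qres μ X f n m := by
  refine Real.iInf_nonneg fun j => Real.sSup_nonneg ?_
  rintro _ ⟨i, -, rfl⟩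
  exact ENNReal.toReal_nonneg

theorem card_bigSet_le (μ : Measure Ω) (X : ℕ → Ω → E) (f : ℕ → E → ℤ) (m N : ℕ) {ε b : ℝ}
    (hε : 0 < ε) (hb : ∑ n ∈ Finset.Icc 1 N, qres μ X f n m ≤ b) :
    ((bigSet μ X f m N ε).card : ℝ) ≤ b / ε := by
  rw [le_div_iff₀ hε, ← nsmul_eq_mul]
  refine (Finset.card_nsmul_le_sum _ (fun n => qres μ X f n m) ε fun n hn => ?_).trans
    ((Finset.sum_le_sum_of_subset_of_nonneg ?_ fun n _ _ => qres_nonneg μ X f n m).trans hb)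
  · exact (Finset.mem_filter.1 hn).2
  · exact Finset.filter_subset _ _

end Chain

/-- Lemma 5.1. Suppose `∑_{n=1}^N q_n(m) ≤ R ln V_N`, fix `εbar > 0`, let
`𝓑 = {1 ≤ n ≤ N : q_n(m) ≥ εbar}` (so `N₀ = |𝓑| ≤ R ln V_N / εbar`) and `𝓔 = σ(X_n : n ∈ 𝓑)`.
Then, for a constant `C'` independent of `N`, almost surely
`|𝔼(S_N|𝓔) - 𝔼(S_N)| ≤ C' N₀ ≤ C' R ln V_N / εbar` and `|Var(S_N|𝓔) - V_N| ≤ C' ln² V_N`. -/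
theorem conditional_mean_variance_estimates
    (μ : Measure Ω) (X : ℕ → Ω → E) (κ : ℕ → Kernel E E) (f : ℕ → E → ℤ)
    (C : ℝ) (K m : ℕ) (hC : 1 < C) (hK : 1 ≤ K) (hm : 2 ≤ m) (hmK : m ≤ 2 * K)
    (hchain : UEChain μ X κ C) (hf : ∀ n, Measurable (f n))
    (hbound : ∀ n ω, |f n (X n ω)| ≤ (K : ℤ))
    (hV : Tendsto (fun N => VN μ X f N) atTop atTop)
    (R εbar : ℝ) (hR : 0 < R) (hε : 0 < εbar) :
    ∃ C' : ℝ, 0 < C' ∧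
      ∀ N : ℕ,
        (∑ n ∈ Finset.Icc 1 N, qres μ X f n m) ≤ R * Real.log (VN μ X f N) →
        (((bigSet μ X f m N εbar).card : ℝ) ≤ R * Real.log (VN μ X f N) / εbar) ∧
        ∀ᵐ ω ∂μ,
          |(μ[fun ω' => ((S X f N ω' : ℝ)) | sigmaFinset X (bigSet μ X f m N εbar)]) ω -
              meanS μ X f N| ≤ C' * ((bigSet μ X f m N εbar).card : ℝ) ∧
          C' * ((bigSet μ X f m N εbar).card : ℝ) ≤ C' * (R * Real.log (VN μ X f N) / εbar) ∧
          |condVar μ (sigmaFinset X (bigSet μ X f m N εbar))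
              (fun ω' => ((S X f N ω' : ℝ))) ω - VN μ X f N|
            ≤ C' * (Real.log (VN μ X f N)) ^ 2 := by

  have hX := hchain.2.1
  have hC0 : 0 < C := zero_lt_one.trans hC
  have hc := mixingConst_nonneg hC
  set Y : ℕ → Ω → ℝ := fun n ω => (f n (X n ω) : ℝ) with hYdef
  have hY : ∀ n, StronglyMeasurable[sigmaFinset X {n}] (Y n) := fun n =>
    (((measurable_from_top (f := fun z : ℤ => (z : ℝ))).comp (hf n)).comp
      ((comap_measurable (X n)).mono
        (comap_le_sigmaFinset X (Finset.mem_singleton_self n)) le_rfl)).stronglyMeasurable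
  have hL : ∀ n ω, |Y n ω| ≤ (K : ℝ) := fun n ω => by
    simp only [hYdef]
    exact_mod_cast hbound n ω
  have hS : ∀ N, (fun ω => (S X f N ω : ℝ)) = fun ω => ∑ n ∈ Finset.Icc 1 N, Y n ω := by
    intro N
    funext ω
    simp [S, hYdef]
  set M₁ := mixingConst C * K * (2 * C) with hM₁
  set M₂ := 12 * mixingConst C * (K : ℝ) ^ 2 * (2 * (1 - √(1 - C⁻¹))⁻¹) ^ 2 with hM₂
  have hM₁0 : 0 ≤ M₁ := by positivity
  have hM₂0 : 0 ≤ M₂ := by positivity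
  refine ⟨M₁ + M₂ * (R / εbar) ^ 2 + 1, by positivity, fun N hN => ?_⟩
  have hcard := card_bigSet_le μ X f m N hε hN
  refine ⟨hcard, ?_⟩
  simp only [meanS, VN, hS] at hcard ⊢
  filter_upwards [hchain.abs_condExp_sum_sub_le hC hY hL (bigSet μ X f m N εbar) (Finset.Icc 1 N),
    hchain.abs_condVar_sum_sub_variance_le hC hY hL (bigSet μ X f m N εbar) (Finset.Icc 1 N)]
    with ω h₁ h₂
  have hrest : 0 ≤ M₂ * (R / εbar) ^ 2 := by positivity
  refine ⟨h₁.trans ?_, by gcongr, h₂.trans ?_⟩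
  · gcongr
    linarith
  · set l := Real.log (variance (fun ω => ∑ n ∈ Finset.Icc 1 N, Y n ω) μ)
    have hsq : ((bigSet μ X f m N εbar).card : ℝ) ^ 2 ≤ (R / εbar) ^ 2 * l ^ 2 := by
      rw [← mul_pow, div_mul_eq_mul_div]
      gcongr
    calc M₂ * ((bigSet μ X f m N εbar).card : ℝ) ^ 2 ≤ M₂ * ((R / εbar) ^ 2 * l ^ 2) := by gcongr
      _ = M₂ * (R / εbar) ^ 2 * l ^ 2 := by ring
      _ ≤ (M₁ + M₂ * (R / εbar) ^ 2 + 1) * l ^ 2 := by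
        gcongr
        linarith

end EdgeworthMC
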